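/- Let f ∈ Hol(α) be a bounded α-Hölder potential which is normalized (L_f 1 = 1), let ν be the unique Borel probability measure on X with L_f^*ν = ν, and let ξ ∈ Hol(α) be a real-valued bounded α-Hölder function with ∫_X ξ dν = 0. Set S_n(ξ) = Σ_{k=0}^{n−1} ξ∘σ^k. Then the limit s² = lim_{n→∞} (1/n)·∫_X (S_n(ξ))² dν exists, and if s > 0 there exists C > 0 such that for every n ∈ ℕ: sup_{u ∈ ℝ} | ν({x ∈ X : S_n(ξ)(x) ≤ u·√n}) − Φ(u/s) | ≤ C·n^{−1/2}, where Φ denotes the cumulative distribution function of the standard normal distribution. -/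

import Mathlib

open MeasureTheory Filter Topology BoundedContinuousFunction

noncomputable section

variable {E : Type*} [MetricSpace E]

/-- The metric on the sequence space `X = E^ℕ`:
`d_X(x,y) = ∑_{n=1}^∞ 2⁻ⁿ · min(d_E(x_n,y_n), 1)`. -/
def dX (x y : ℕ → E) : ℝ :=
  ∑' n : ℕ, ((1 : ℝ) / 2) ^ (n + 1) * min (dist (x n) (y n)) 1

/-- The left shift `σ(x₁,x₂,x₃,…) = (x₂,x₃,…)`. -/
def shift (x : ℕ → E) : ℕ → E := fun n => x (n + 1)

theorem continuous_shift : Continuous (shift (E := E)) :=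
  continuous_pi fun n => continuous_apply (n + 1)

/-- Prepending one symbol: `ax = (a, x₁, x₂, …)`. -/
def cons (a : E) (x : ℕ → E) : ℕ → E := fun n => Nat.casesOn n a x

/-- Prepending a finite word `a = (a₁,…,a_n)`. -/
def prepend {n : ℕ} (a : Fin n → E) (x : ℕ → E) : ℕ → E :=
  fun k => if h : k < n then a ⟨k, h⟩ else x (k - n)

/-- Birkhoff sums `f_n = ∑_{k=0}^{n-1} f ∘ σᵏ`. -/
def birkhoff (f : (ℕ → E) → ℝ) (n : ℕ) (x : ℕ → E) : ℝ :=
  ∑ k ∈ Finset.range n, f (shift^[k] x)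

/-- Boundedness of a real-valued function on `X`. -/
def Bdd (g : (ℕ → E) → ℝ) : Prop := ∃ M : ℝ, ∀ x, |g x| ≤ M

/-- `g` is `α`-Hölder with constant `C` (w.r.t. the metric `dX`). -/
def HolderConst (α C : ℝ) (g : (ℕ → E) → ℝ) : Prop :=
  ∀ x y, |g x - g y| ≤ C * dX x y ^ α

/-- `g ∈ Hol(α)`: bounded, continuous and `α`-Hölder. -/
def MemHol (α : ℝ) (g : (ℕ → E) → ℝ) : Prop :=
  Continuous g ∧ Bdd g ∧ ∃ C : ℝ, HolderConst α C g

/-- `g ∈ C_b(X,ℝ)`: bounded and continuous. -/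
def MemCb (g : (ℕ → E) → ℝ) : Prop := Continuous g ∧ Bdd g

/-- The Hölder seminorm `D_α(g) = sup_{x ≠ y} |g x - g y| / d_X(x,y)^α`. -/
def Dalpha (α : ℝ) (g : (ℕ → E) → ℝ) : ℝ :=
  sSup {r : ℝ | ∃ x y : ℕ → E, x ≠ y ∧ r = |g x - g y| / dX x y ^ α}

/-- The supremum norm `‖g‖_∞`. -/
def supNorm (g : (ℕ → E) → ℝ) : ℝ := ⨆ x : ℕ → E, |g x|

/-- The Hölder norm `‖g‖_α = ‖g‖_∞ + D_α(g)`. -/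
def alphaNorm (α : ℝ) (g : (ℕ → E) → ℝ) : ℝ := supNorm g + Dalpha α g

variable [MeasurableSpace E] [BorelSpace E]

/-- The Ruelle transfer operator `L_f φ(x) = ∫_E e^{f(ax)} φ(ax) dp(a)`. -/
def ruelle (p : Measure E) (f φ : (ℕ → E) → ℝ) : (ℕ → E) → ℝ :=
  fun x => ∫ a, Real.exp (f (cons a x)) * φ (cons a x) ∂p

/-- The normalized operators `P^m_n(φ) = L_f^m(φ · L_f^n 1) / L_f^{m+n} 1`. -/
def Pmn (p : Measure E) (f : (ℕ → E) → ℝ) (m n : ℕ) (φ : (ℕ → E) → ℝ) : (ℕ → E) → ℝ :=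
  fun x => (ruelle p f)^[m] (fun y => φ y * (ruelle p f)^[n] (fun _ => 1) y) x /
    (ruelle p f)^[m + n] (fun _ => 1) x

/-- The equivalent bounded metric `d̄(x,y) = min{1, 4 C_f d_X(x,y)^α}`. -/
def dbar (Cf α : ℝ) (x y : ℕ → E) : ℝ := min 1 (4 * Cf * dX x y ^ α)

/-- The Wasserstein distance associated to `d̄`, via Kantorovich duality. -/
def wass (Cf α : ℝ) (μ₁ μ₂ : Measure (ℕ → E)) : ℝ :=
  sSup {r : ℝ | ∃ g : (ℕ → E) → ℝ,
    (∀ x y, |g x - g y| ≤ dbar Cf α x y) ∧ r = (∫ x, g x ∂μ₁) - ∫ x, g x ∂μ₂}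

/-- The cumulative distribution function of the standard normal distribution. -/
def stdNormalCDF (u : ℝ) : ℝ :=
  (Real.sqrt (2 * Real.pi))⁻¹ * ∫ t in Set.Iic u, Real.exp (-t ^ 2 / 2)

/-!
This is Nagaev's method. Writing `L` for the Ruelle operator, `∫ exp (i t S_n ξ) dν` is the
`ν`-mean of the `n`-th iterate on `1` of the twisted operator `φ ↦ L (exp (i t ξ) φ)`. Instead
of following the leading eigenvalue of this operator by spectral perturbation theory, normalize
the iterates to have mean one: the mean is then the product of the normalizing factors. The
spectral gap of `L` keeps the normalized iterates within `O(t)` of `1`, with first-order part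
given by `∑ₖ Lᵏ ξ`, so the `k`-th factor is `1 - v_k t² / 2 + O(t³)` with `v_k` converging
exponentially fast to the Green–Kubo variance `s²`. Comparing the product with `exp (-n s² t² /
2)` and inserting the result into Esseen's smoothing inequality gives the rate `n ^ (-1/2)`.

The spectral gap comes from coupling. The normalized weights `exp (f (a x))` and `exp (f (a y))`
share a fraction `exp (-D d(ax, ay)^α)` of their mass, so in the gauge `1 - exp (-B d^α)` one
step of `L` replaces `B` by `2 ^ (-α) (D + B)`, which is smaller than `B` as soon as `B` is
large.
-/

/-! ### Esseen's smoothing inequality -/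

section Esseen

open ProbabilityTheory

/-- The Fejér kernel `(1 - cos y) / y ^ 2`, without normalising constant. It is encoded as the
cosine transform of the triangle function `1 - t`, which takes care of the removable singularity
at `0`. -/
def fejerKernel (y : ℝ) : ℝ := ∫ t in (0 : ℝ)..1, (1 - t) * Real.cos (t * y)

theorem fejerKernel_eq_div {y : ℝ} (hy : y ≠ 0) : fejerKernel y = (1 - Real.cos y) / y ^ 2 := by
  have hderiv : ∀ t ∈ Set.uIcc (0 : ℝ) 1, HasDerivAt
      (fun t : ℝ => (1 - t) * (Real.sin (t * y) / y) - Real.cos (t * y) / y ^ 2)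
      ((1 - t) * Real.cos (t * y)) t := by
    intro t _
    have hmul : HasDerivAt (fun t : ℝ => t * y) y t := by
      simpa using (hasDerivAt_id t).mul_const y
    have hsub : HasDerivAt (fun t : ℝ => 1 - t) (-1) t := by
      simpa using (hasDerivAt_id t).const_sub 1
    refine ((hsub.mul (hmul.sin.div_const y)).sub (hmul.cos.div_const (y ^ 2))).congr_deriv ?_
    field_simp
    ring
  rw [fejerKernel, intervalIntegral.integral_eq_sub_of_hasDerivAt hderiv
    (Continuous.intervalIntegrable (by fun_prop) _ _)]
  simp
  ring

theorem continuous_fejerKernel : Continuous fejerKernel :=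
  intervalIntegral.continuous_parametric_intervalIntegral_of_continuous' (by fun_prop) _ _

theorem fejerKernel_zero : fejerKernel 0 = 1 / 2 := by
  simp only [fejerKernel, mul_zero, Real.cos_zero, mul_one]
  rw [intervalIntegral.integral_sub (by simp) (by simp)]
  norm_num

theorem fejerKernel_nonneg (y : ℝ) : 0 ≤ fejerKernel y := by
  rcases eq_or_ne y 0 with rfl | hy
  · rw [fejerKernel_zero]; norm_num
  · rw [fejerKernel_eq_div hy]
    exact div_nonneg (sub_nonneg.2 (Real.cos_le_one y)) (sq_nonneg y)

theorem fejerKernel_le (y : ℝ) : fejerKernel y ≤ 4 * (1 + y ^ 2)⁻¹ := by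
  rw [← div_eq_mul_inv, le_div_iff₀ (by positivity)]
  rcases eq_or_ne y 0 with rfl | hy
  · rw [fejerKernel_zero]; norm_num
  · rw [fejerKernel_eq_div hy, div_mul_eq_mul_div, div_le_iff₀ (by positivity)]
    nlinarith [Real.neg_one_le_cos y, Real.cos_le_one y, Real.one_sub_sq_div_two_le_cos (x := y),
      sq_nonneg y]

theorem integrable_fejerKernel : Integrable fejerKernel :=
  (integrable_inv_one_add_sq.const_mul 4).mono' continuous_fejerKernel.aestronglyMeasurable <|
    Eventually.of_forall fun y => by
      rw [Real.norm_of_nonneg (fejerKernel_nonneg y)]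
      exact fejerKernel_le y

theorem integral_fejerKernel_pos : 0 < ∫ y, fejerKernel y := by
  rw [integral_pos_iff_support_of_nonneg fejerKernel_nonneg integrable_fejerKernel]
  exact continuous_fejerKernel.isOpen_support.measure_pos _ ⟨0, by simp [fejerKernel_zero]⟩

theorem exists_fejerKernel_window :
    ∃ a : ℝ, 0 ≤ a ∧ 3 / 4 * ∫ y, fejerKernel y ≤ ∫ z in -a..a, fejerKernel z := by
  have hlim := intervalIntegral_tendsto_integral integrable_fejerKernel
    (tendsto_neg_atTop_atBot (G := ℝ)) tendsto_id
  have hlt : 3 / 4 * ∫ y, fejerKernel y < ∫ y, fejerKernel y := by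
    linarith [integral_fejerKernel_pos]
  obtain ⟨a, hwin, ha⟩ :=
    ((hlim.eventually (lt_mem_nhds hlt)).and (eventually_ge_atTop 0)).exists
  exact ⟨a, ha, hwin.le⟩

theorem intervalIntegral_fejerKernel (a b : ℝ) : ∫ v in a..b, fejerKernel v =
    ∫ t in (0 : ℝ)..1, (1 - t) * ((Real.sin (t * b) - Real.sin (t * a)) / t) := by
  unfold fejerKernel
  rw [intervalIntegral_intervalIntegral_swap]
  · refine intervalIntegral.integral_congr_ae (Eventually.of_forall fun t ht => ?_)
    rw [Set.uIoc_of_le zero_le_one] at ht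
    rw [intervalIntegral.integral_const_mul, intervalIntegral.integral_comp_mul_left _ ht.1.ne',
      integral_cos, smul_eq_mul, div_eq_inv_mul]
  · have hcont : Continuous (Function.uncurry fun v t : ℝ => (1 - t) * Real.cos (t * v)) := by
      unfold Function.uncurry; fun_prop
    exact (hcont.continuousOn.integrableOn_compact (isCompact_uIcc.prod isCompact_uIcc)).mono_set
      (Set.prod_mono Set.uIoc_subset_uIcc Set.uIoc_subset_uIcc)

/-- The primitive of the Fejér kernel that vanishes at `-∞`: a smooth substitute for the Heaviside
step function. -/
def fejerPrimitive (z : ℝ) : ℝ := ∫ v in Set.Iic z, fejerKernel v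

theorem fejerPrimitive_sub (a b : ℝ) :
    fejerPrimitive b - fejerPrimitive a = ∫ v in a..b, fejerKernel v :=
  intervalIntegral.integral_Iic_sub_Iic integrable_fejerKernel.integrableOn
    integrable_fejerKernel.integrableOn

theorem fejerPrimitive_nonneg (z : ℝ) : 0 ≤ fejerPrimitive z := integral_nonneg fejerKernel_nonneg

theorem norm_fejerPrimitive_le (z : ℝ) : ‖fejerPrimitive z‖ ≤ ∫ y, fejerKernel y := by
  rw [Real.norm_of_nonneg (fejerPrimitive_nonneg z)]
  exact setIntegral_le_integral integrable_fejerKernel (Eventually.of_forall fejerKernel_nonneg)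

theorem monotone_fejerPrimitive : Monotone fejerPrimitive := fun a b hab => by
  rw [← sub_nonneg, fejerPrimitive_sub]
  exact intervalIntegral.integral_nonneg hab fun v _ => fejerKernel_nonneg v

theorem tendsto_fejerPrimitive_atBot : Tendsto fejerPrimitive atBot (𝓝 0) := by
  have harctan : Tendsto (fun z => 4 * (Real.arctan z + Real.pi / 2)) atBot (𝓝 0) := by
    simpa using ((Real.tendsto_arctan_atBot.mono_right nhdsWithin_le_nhds).add_const
      (Real.pi / 2)).const_mul 4
  refine squeeze_zero fejerPrimitive_nonneg (fun z => ?_) harctan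
  rw [← integral_Iic_inv_one_add_sq, ← integral_const_mul]
  exact integral_mono integrable_fejerKernel.integrableOn
    (integrable_inv_one_add_sq.const_mul 4).integrableOn fejerKernel_le

/-- The (unnormalised) convolution of the distribution function of `μ` with the Fejér kernel, whose
increments only involve the characteristic function of `μ` on `[0, 1]`. -/
def smoothedCDF (μ : Measure ℝ) (x : ℝ) : ℝ := ∫ y, fejerPrimitive (x - y) ∂μ

theorem integrable_fejerKernel_mul_cdf (μ : Measure ℝ) (x : ℝ) :
    Integrable fun z => fejerKernel z * cdf μ (x - z) := by
  refine integrable_fejerKernel.mul_bdd (c := 1) ?_ (Eventually.of_forall fun z => ?_)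
  · exact ((monotone_cdf μ).measurable.comp (by fun_prop)).aestronglyMeasurable
  · rw [Real.norm_of_nonneg (cdf_nonneg μ _)]
    exact cdf_le_one μ _

variable (μ γ : Measure ℝ) [IsProbabilityMeasure μ] [IsProbabilityMeasure γ]

theorem integrable_fejerPrimitive_sub (x : ℝ) : Integrable (fun y => fejerPrimitive (x - y)) μ :=
  .of_bound (monotone_fejerPrimitive.measurable.comp (by fun_prop)).aestronglyMeasurable _
    (Eventually.of_forall fun _ => norm_fejerPrimitive_le _)

theorem tendsto_smoothedCDF_atBot : Tendsto (smoothedCDF μ) atBot (𝓝 0) := by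
  have hlim : Tendsto (smoothedCDF μ) atBot (𝓝 (∫ _, (0 : ℝ) ∂μ)) := by
    refine tendsto_integral_filter_of_dominated_convergence (fun _ => ∫ y, fejerKernel y)
      (Eventually.of_forall fun x => (integrable_fejerPrimitive_sub μ x).aestronglyMeasurable)
      (Eventually.of_forall fun x => Eventually.of_forall fun y => norm_fejerPrimitive_le _)
      (integrable_const _) (Eventually.of_forall fun y => ?_)
    exact tendsto_fejerPrimitive_atBot.comp (tendsto_id.atBot_add tendsto_const_nhds (C := -y))
  simpa only [integral_zero] using hlim

theorem smoothedCDF_eq_integral_cdf (x : ℝ) :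
    smoothedCDF μ x = ∫ z, fejerKernel z * cdf μ (x - z) := by
  have hmem (y z : ℝ) : (Set.Iic (x - y)).indicator fejerKernel z =
      (Set.Iic (x - z)).indicator (fun _ => fejerKernel z) y := by
    simp only [Set.indicator, Set.mem_Iic, le_sub_comm]
  have hint : Integrable (Function.uncurry fun y z => (Set.Iic (x - y)).indicator fejerKernel z)
      (μ.prod volume) := by
    have hset : MeasurableSet {q : ℝ × ℝ | q.2 ≤ x - q.1} :=
      measurableSet_le (by fun_prop) (by fun_prop)
    refine ((integrable_fejerKernel.comp_snd μ).indicator hset).congr (Eventually.of_forall ?_)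
    rintro ⟨y, z⟩
    simp only [Function.uncurry, Set.indicator, Set.mem_ofPred_eq, Set.mem_Iic]
  calc smoothedCDF μ x = ∫ y, ∫ z, (Set.Iic (x - y)).indicator fejerKernel z ∂volume ∂μ := by
        simp_rw [integral_indicator measurableSet_Iic]; rfl
    _ = ∫ z, ∫ y, (Set.Iic (x - z)).indicator (fun _ => fejerKernel z) y ∂μ := by
        rw [integral_integral_swap hint]; simp_rw [hmem]
    _ = ∫ z, fejerKernel z * cdf μ (x - z) := by
        simp_rw [integral_indicator measurableSet_Iic, setIntegral_const, smul_eq_mul,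
          cdf_eq_real, mul_comm]

theorem integrable_sin_increment (x x' : ℝ) :
    Integrable (Function.uncurry fun t y : ℝ =>
      (1 - t) * ((Real.sin (t * (x - y)) - Real.sin (t * (x' - y))) / t))
      ((volume.restrict (Set.Ioc 0 1)).prod μ) := by
  refine .of_bound (Measurable.aestronglyMeasurable (by unfold Function.uncurry; fun_prop))
    |x - x'| ?_
  have hprod : ((volume : Measure ℝ).restrict (Set.Ioc 0 1)).prod μ =
      (volume.prod μ).restrict (Set.Ioc 0 1 ×ˢ Set.univ) := by
    rw [← Measure.prod_restrict, Measure.restrict_univ]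
  rw [hprod, ae_restrict_iff' (by measurability)]
  refine Eventually.of_forall ?_
  rintro ⟨t, y⟩ ⟨⟨ht0, ht1⟩, -⟩
  dsimp only at ht0 ht1
  have hlip : |Real.sin (t * (x - y)) - Real.sin (t * (x' - y))| ≤ t * |x - x'| := by
    have := Real.lipschitzWith_sin.dist_le_mul (t * (x - y)) (t * (x' - y))
    rwa [Real.dist_eq, Real.dist_eq, ← mul_sub, sub_sub_sub_cancel_right, abs_mul, abs_of_pos ht0,
      NNReal.coe_one, one_mul] at this
  rw [Function.uncurry, norm_mul, norm_div, Real.norm_of_nonneg (by linarith : 0 ≤ 1 - t),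
    Real.norm_of_nonneg ht0.le]
  calc (1 - t) * (‖Real.sin (t * (x - y)) - Real.sin (t * (x' - y))‖ / t)
      ≤ 1 * |x - x'| := by
        gcongr
        · linarith
        · exact (div_le_iff₀' ht0).2 hlip
    _ = |x - x'| := one_mul _

theorem smoothedCDF_sub (x x' : ℝ) : smoothedCDF μ x - smoothedCDF μ x' =
    ∫ t in (0 : ℝ)..1, ∫ y,
      (1 - t) * ((Real.sin (t * (x - y)) - Real.sin (t * (x' - y))) / t) ∂μ := by
  rw [smoothedCDF, smoothedCDF,
    ← integral_sub (integrable_fejerPrimitive_sub μ x) (integrable_fejerPrimitive_sub μ x')]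
  simp_rw [fejerPrimitive_sub, intervalIntegral_fejerKernel]
  refine (intervalIntegral_integral_swap ?_).symm
  rw [Set.uIoc_of_le zero_le_one]
  exact integrable_sin_increment μ x x'

theorem integrable_sin_mul_sub (s x : ℝ) : Integrable (fun y : ℝ => Real.sin (s * (x - y))) μ :=
  .of_bound (by fun_prop) 1 (Eventually.of_forall fun _ => Real.abs_sin_le_one _)

theorem integral_sin_mul_sub (s x : ℝ) : ∫ y, Real.sin (s * (x - y)) ∂μ =
    (Complex.exp ((s * x : ℝ) * Complex.I) * charFun μ (-s)).im := by
  have hexp (y : ℝ) : Complex.exp ((s * x : ℝ) * Complex.I) *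
      Complex.exp ((-s : ℝ) * y * Complex.I) = Complex.exp ((s * (x - y) : ℝ) * Complex.I) := by
    rw [← Complex.exp_add]; push_cast; ring_nf
  have hint : Integrable (fun y : ℝ => Complex.exp ((s * (x - y) : ℝ) * Complex.I)) μ :=
    .of_bound (by fun_prop) 1 (Eventually.of_forall fun y => (Complex.norm_exp_ofReal_mul_I _).le)
  rw [charFun_apply_real, ← integral_const_mul]
  simp_rw [hexp]
  rw [← RCLike.im_eq_complex_im, ← integral_im hint]
  simp only [RCLike.im_eq_complex_im, Complex.exp_ofReal_mul_I_im]

theorem abs_integral_sin_sub_le (s x : ℝ) :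
    |∫ y, Real.sin (s * (x - y)) ∂μ - ∫ y, Real.sin (s * (x - y)) ∂γ| ≤
      ‖charFun μ s - charFun γ s‖ := by
  rw [integral_sin_mul_sub, integral_sin_mul_sub, ← Complex.sub_im, ← mul_sub]
  refine (Complex.abs_im_le_norm _).trans_eq ?_
  rw [norm_mul, Complex.norm_exp_ofReal_mul_I, one_mul, charFun_neg, charFun_neg, ← map_sub,
    RCLike.norm_conj]

theorem abs_integral_sin_increment_sub_le (x x' : ℝ) {t : ℝ} (ht : t ∈ Set.Ioc (0 : ℝ) 1) :
    |∫ y, (1 - t) * ((Real.sin (t * (x - y)) - Real.sin (t * (x' - y))) / t) ∂μ -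
      ∫ y, (1 - t) * ((Real.sin (t * (x - y)) - Real.sin (t * (x' - y))) / t) ∂γ| ≤
      2 * (‖charFun μ t - charFun γ t‖ / t) := by
  simp only [integral_const_mul, integral_div]
  rw [integral_sub (integrable_sin_mul_sub μ t x) (integrable_sin_mul_sub μ t x'),
    integral_sub (integrable_sin_mul_sub γ t x) (integrable_sin_mul_sub γ t x'), ← mul_sub,
    ← sub_div, sub_sub_sub_comm, abs_mul, abs_div, abs_of_nonneg (sub_nonneg.2 ht.2),
    abs_of_pos ht.1]
  have hle := (abs_sub _ _).trans (add_le_add (abs_integral_sin_sub_le μ γ t x)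
    (abs_integral_sin_sub_le μ γ t x'))
  calc _ ≤ 1 * ((‖charFun μ t - charFun γ t‖ + ‖charFun μ t - charFun γ t‖) / t) :=
        mul_le_mul (by linarith [ht.1]) (div_le_div_of_nonneg_right hle ht.1.le)
          (div_nonneg (abs_nonneg _) ht.1.le) zero_le_one
    _ = 2 * (‖charFun μ t - charFun γ t‖ / t) := by ring

variable {μ γ}

theorem abs_smoothedCDF_sub_le
    (hint : IntervalIntegrable (fun t => ‖charFun μ t - charFun γ t‖ / t) volume 0 1) (x : ℝ) :
    |smoothedCDF μ x - smoothedCDF γ x| ≤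
      2 * ∫ t in (0 : ℝ)..1, ‖charFun μ t - charFun γ t‖ / t := by
  have hlim : Tendsto (fun x' => |(smoothedCDF μ x - smoothedCDF μ x') -
      (smoothedCDF γ x - smoothedCDF γ x')|) atBot (𝓝 |smoothedCDF μ x - smoothedCDF γ x|) := by
    simpa only [sub_zero] using (((tendsto_smoothedCDF_atBot μ).const_sub (smoothedCDF μ x)).sub
      ((tendsto_smoothedCDF_atBot γ).const_sub (smoothedCDF γ x))).abs
  refine le_of_tendsto' hlim fun x' => ?_
  have hii (ρ : Measure ℝ) [IsProbabilityMeasure ρ] : IntervalIntegrable (fun t : ℝ => ∫ y,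
      (1 - t) * ((Real.sin (t * (x - y)) - Real.sin (t * (x' - y))) / t) ∂ρ) volume 0 1 := by
    rw [intervalIntegrable_iff_integrableOn_Ioc_of_le zero_le_one]
    exact (integrable_sin_increment ρ x x').integral_prod_left
  rw [smoothedCDF_sub, smoothedCDF_sub, ← intervalIntegral.integral_sub (hii μ) (hii γ),
    ← intervalIntegral.integral_const_mul, ← Real.norm_eq_abs]
  exact intervalIntegral.norm_integral_le_of_norm_le zero_le_one
    (Eventually.of_forall fun t ht => abs_integral_sin_increment_sub_le μ γ x x' ht)
    (hint.const_mul 2)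

theorem abs_integral_fejerKernel_mul_cdf_sub_le
    (hint : IntervalIntegrable (fun t => ‖charFun μ t - charFun γ t‖ / t) volume 0 1) (x : ℝ) :
    |∫ z, fejerKernel z * (cdf μ (x - z) - cdf γ (x - z))| ≤
      2 * ∫ t in (0 : ℝ)..1, ‖charFun μ t - charFun γ t‖ / t := by
  have hle := abs_smoothedCDF_sub_le hint x
  rw [smoothedCDF_eq_integral_cdf, smoothedCDF_eq_integral_cdf,
    ← integral_sub (integrable_fejerKernel_mul_cdf _ x) (integrable_fejerKernel_mul_cdf _ x)] at hle
  simpa only [mul_sub] using hle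

theorem le_of_integral_fejerKernel_mul_le {g : ℝ → ℝ} {η a q S : ℝ} (hg : Measurable g)
    (hη : ∀ z, |g z| ≤ η) (ha : 0 ≤ a)
    (hwin : 3 / 4 * ∫ y, fejerKernel y ≤ ∫ z in -a..a, fejerKernel z)
    (hq : ∀ z ∈ Set.Ioc (-a) a, q ≤ g z) (hS : ∫ z, fejerKernel z * g z ≤ S) (hS0 : 0 ≤ S) :
    q ≤ η / 3 + 4 / 3 * (S / ∫ y, fejerKernel y) := by
  have hJ := integral_fejerKernel_pos
  set J := ∫ y, fejerKernel y
  have hη0 : 0 ≤ η := (abs_nonneg _).trans (hη 0)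
  rcases le_total (q + η) 0 with hneg | hpos
  · have : 0 ≤ S / J := by positivity
    linarith
  have hind := (integrable_fejerKernel.indicator (measurableSet_Ioc (a := -a) (b := a))).const_mul
    (q + η)
  have hpoint (z : ℝ) : -η * fejerKernel z +
      (q + η) * (Set.Ioc (-a) a).indicator fejerKernel z ≤ fejerKernel z * g z := by
    have hk := fejerKernel_nonneg z
    by_cases hz : z ∈ Set.Ioc (-a) a
    · rw [Set.indicator_of_mem hz]
      nlinarith [hq z hz]
    · rw [Set.indicator_of_notMem hz]
      nlinarith [(abs_le.1 (hη z)).1]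
  have havg : -η * J + (q + η) * (∫ z in -a..a, fejerKernel z) ≤ S := by
    calc -η * J + (q + η) * (∫ z in -a..a, fejerKernel z)
        = ∫ z, -η * fejerKernel z + (q + η) * (Set.Ioc (-a) a).indicator fejerKernel z := by
          rw [integral_add (integrable_fejerKernel.const_mul _) hind, integral_const_mul,
            integral_const_mul, integral_indicator measurableSet_Ioc,
            intervalIntegral.integral_of_le (by linarith)]
      _ ≤ ∫ z, fejerKernel z * g z :=
          integral_mono ((integrable_fejerKernel.const_mul (-η)).add hind)
            (integrable_fejerKernel.mul_bdd hg.aestronglyMeasurable (Eventually.of_forall hη))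
            hpoint
      _ ≤ S := hS
  have hmass := mul_le_mul_of_nonneg_left hwin hpos
  have hle : (3 / 4 * q - η / 4) * J ≤ S := by nlinarith
  rw [← le_div_iff₀ hJ] at hle
  linarith

theorem abs_cdf_sub_le_of_forall_abs_le {m : NNReal} (hlip : LipschitzWith m (cdf γ))
    (hint : IntervalIntegrable (fun t => ‖charFun μ t - charFun γ t‖ / t) volume 0 1)
    {η a : ℝ} (hη : ∀ u, |cdf μ u - cdf γ u| ≤ η) (ha : 0 ≤ a)
    (hwin : 3 / 4 * ∫ y, fejerKernel y ≤ ∫ z in -a..a, fejerKernel z) (u : ℝ) :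
    |cdf μ u - cdf γ u| ≤ η / 3 + 4 / 3 *
      ((2 * ∫ t in (0 : ℝ)..1, ‖charFun μ t - charFun γ t‖ / t) / ∫ y, fejerKernel y) +
        m * (2 * a) := by
  have hsmooth := abs_integral_fejerKernel_mul_cdf_sub_le hint
  have hmeas (x : ℝ) : Measurable fun z => cdf μ (x - z) - cdf γ (x - z) :=
    ((monotone_cdf μ).measurable.comp (by fun_prop)).sub
      ((monotone_cdf γ).measurable.comp (by fun_prop))
  have hdrift {v w : ℝ} (h0 : 0 ≤ w - v) (h2a : w - v ≤ 2 * a) :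
      cdf γ w - cdf γ v ≤ m * (2 * a) := by
    refine (le_abs_self _).trans ((hlip.dist_le_mul w v).trans ?_)
    rw [Real.dist_eq, abs_of_nonneg h0]
    gcongr
  refine abs_le'.2 ⟨?_, ?_⟩ <;> rw [← sub_le_iff_le_add]
  · refine le_of_integral_fejerKernel_mul_le (hmeas (u + a)) (fun z => hη _) ha hwin
      (fun z hz => ?_) (le_of_abs_le (hsmooth (u + a))) ((abs_nonneg _).trans (hsmooth 0))
    have hmono := monotone_cdf μ (show u ≤ u + a - z by linarith [hz.2])
    have := hdrift (show 0 ≤ u + a - z - u by linarith [hz.2]) (by linarith [hz.1])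
    linarith
  · refine le_of_integral_fejerKernel_mul_le (hmeas (u - a)).neg
      (fun z => (abs_neg _).trans_le (hη _)) ha hwin (fun z hz => ?_) ?_
      ((abs_nonneg _).trans (hsmooth 0))
    · have hmono := monotone_cdf μ (show u - a - z ≤ u by linarith [hz.1])
      have := hdrift (show 0 ≤ u - (u - a - z) by linarith [hz.1]) (by linarith [hz.2])
      simp only [Pi.neg_apply]
      linarith
    · simp only [Pi.neg_apply, mul_neg, integral_neg]
      exact (neg_le_abs _).trans (hsmooth (u - a))

theorem exists_abs_cdf_sub_le_of_unit_interval : ∃ C : ℝ, 0 < C ∧ ∀ (μ γ : Measure ℝ)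
    [IsProbabilityMeasure μ] [IsProbabilityMeasure γ] (m : NNReal), LipschitzWith m (cdf γ) →
    IntervalIntegrable (fun t => ‖charFun μ t - charFun γ t‖ / t) volume 0 1 →
    ∀ x, |cdf μ x - cdf γ x| ≤ C * ((∫ t in (0 : ℝ)..1, ‖charFun μ t - charFun γ t‖ / t) + m) := by
  have hJ := integral_fejerKernel_pos
  obtain ⟨a, ha, hwin⟩ := exists_fejerKernel_window
  refine ⟨3 * a + 4 / ∫ y, fejerKernel y, by positivity, fun μ γ _ _ m hlip hint x => ?_⟩
  have hbdd : BddAbove (Set.range fun u => |cdf μ u - cdf γ u|) := by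
    refine ⟨1, ?_⟩
    rintro _ ⟨u, rfl⟩
    exact abs_sub_le_of_nonneg_of_le (cdf_nonneg μ u) (cdf_le_one μ u) (cdf_nonneg γ u)
      (cdf_le_one γ u)
  -- With `η` the supremum itself, the term `η / 3` can be absorbed.
  have hsup := ciSup_le fun u => abs_cdf_sub_le_of_forall_abs_le hlip hint (le_ciSup hbdd) ha hwin u
  have hx := le_ciSup hbdd x
  have hI : 0 ≤ ∫ t in (0 : ℝ)..1, ‖charFun μ t - charFun γ t‖ / t :=
    intervalIntegral.integral_nonneg zero_le_one fun t ht => div_nonneg (norm_nonneg _) ht.1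
  set I := ∫ t in (0 : ℝ)..1, ‖charFun μ t - charFun γ t‖ / t
  set J := ∫ y, fejerKernel y
  have hexpand : (3 * a + 4 / J) * (I + m) =
      3 * a * I + 4 * (I / J) + 3 * (m * a) + 4 / J * m := by ring
  have : 0 ≤ 3 * a * I := by positivity
  have : 0 ≤ 4 / J * (m : ℝ) := by positivity
  rw [mul_div_assoc] at hsup
  linarith

theorem cdf_map_mul_left {T : ℝ} (hT : 0 < T) (x : ℝ) :
    cdf (μ.map (T * ·)) (T * x) = cdf μ x := by
  have : IsProbabilityMeasure (μ.map (T * ·)) := Measure.isProbabilityMeasure_map (by fun_prop)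
  rw [cdf_eq_real, cdf_eq_real, map_measureReal_apply (by fun_prop) measurableSet_Iic]
  congr 1
  ext y
  simp only [Set.mem_preimage, Set.mem_Iic, mul_le_mul_iff_right₀ hT]

theorem lipschitzWith_cdf_map_mul_left {T : NNReal} (hT : 0 < T) {m : NNReal}
    (hlip : LipschitzWith m (cdf γ)) : LipschitzWith (m / T) (cdf (γ.map ((T : ℝ) * ·))) := by
  have hT' : (0 : ℝ) < T := hT
  refine LipschitzWith.of_dist_le_mul fun x y => ?_
  obtain ⟨x, rfl⟩ := (mul_left_surjective₀ hT'.ne') x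
  obtain ⟨y, rfl⟩ := (mul_left_surjective₀ hT'.ne') y
  simp only [cdf_map_mul_left hT']
  refine (hlip.dist_le_mul x y).trans_eq ?_
  rw [Real.dist_eq, Real.dist_eq, ← mul_sub, abs_mul, abs_of_pos hT', NNReal.coe_div]
  field_simp

theorem exists_abs_cdf_sub_le : ∃ C : ℝ, 0 < C ∧ ∀ (μ γ : Measure ℝ)
    [IsProbabilityMeasure μ] [IsProbabilityMeasure γ] (m T : NNReal), 0 < T →
    LipschitzWith m (cdf γ) →
    IntervalIntegrable (fun t => ‖charFun μ t - charFun γ t‖ / t) volume 0 T →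
    ∀ x, |cdf μ x - cdf γ x| ≤
      C * ((∫ t in (0 : ℝ)..T, ‖charFun μ t - charFun γ t‖ / t) + m / T) := by
  obtain ⟨C, hC, hunit⟩ := exists_abs_cdf_sub_le_of_unit_interval
  refine ⟨C, hC, fun μ γ _ _ m T hT hlip hint x => ?_⟩
  have hT' : (0 : ℝ) < T := hT
  have hμ : IsProbabilityMeasure (μ.map ((T : ℝ) * ·)) :=
    Measure.isProbabilityMeasure_map (by fun_prop)
  have hγ : IsProbabilityMeasure (γ.map ((T : ℝ) * ·)) :=
    Measure.isProbabilityMeasure_map (by fun_prop)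
  have hscale : (fun t => ‖charFun (μ.map ((T : ℝ) * ·)) t - charFun (γ.map ((T : ℝ) * ·)) t‖ / t) =
      fun t => T * (‖charFun μ (T * t) - charFun γ (T * t)‖ / (T * t)) := by
    ext t
    rw [charFun_map_mul, charFun_map_mul]
    field_simp
  have hle := hunit (μ.map ((T : ℝ) * ·)) (γ.map ((T : ℝ) * ·)) (m / T)
    (lipschitzWith_cdf_map_mul_left hT hlip) ?_ (T * x)
  · rwa [cdf_map_mul_left hT', cdf_map_mul_left hT', hscale, intervalIntegral.integral_const_mul,
      intervalIntegral.integral_comp_mul_left (fun t => ‖charFun μ t - charFun γ t‖ / t) hT'.ne',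
      mul_zero, mul_one, smul_eq_mul, mul_inv_cancel_left₀ hT'.ne', NNReal.coe_div] at hle
  · rw [hscale]
    refine IntervalIntegrable.const_mul ?_ _
    simpa [hT'.ne'] using hint.comp_mul_left (c := (T : ℝ))

end Esseen

/-! ### Observables -/

section GaugeLipschitz

variable {X 𝔸 : Type*} [TopologicalSpace X] [NormedRing 𝔸] {d : X → X → ℝ} {c c' : ℝ}
  {φ ψ : X →ᵇ 𝔸}

/-- `φ` is `c`-Lipschitz with respect to the gauge `d`. The Ruelle operator contracts oscillations
measured by a gauge other than the metric, so `d` is an arbitrary function. -/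
def GaugeLipschitz (d : X → X → ℝ) (c : ℝ) (φ : X →ᵇ 𝔸) : Prop := ∀ x y, ‖φ x - φ y‖ ≤ c * d x y

theorem gaugeLipschitz_const (d : X → X → ℝ) (a : 𝔸) :
    GaugeLipschitz d 0 (BoundedContinuousFunction.const X a) := fun x y => by simp

theorem gaugeLipschitz_one (d : X → X → ℝ) : GaugeLipschitz d 0 (1 : X →ᵇ 𝔸) :=
  gaugeLipschitz_const d 1

namespace GaugeLipschitz

theorem mono (hd : ∀ x y, 0 ≤ d x y) (hφ : GaugeLipschitz d c φ) (hc : c ≤ c') :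
    GaugeLipschitz d c' φ :=
  fun x y => (hφ x y).trans (mul_le_mul_of_nonneg_right hc (hd x y))

theorem add (hφ : GaugeLipschitz d c φ) (hψ : GaugeLipschitz d c' ψ) :
    GaugeLipschitz d (c + c') (φ + ψ) := fun x y => by
  rw [BoundedContinuousFunction.add_apply, BoundedContinuousFunction.add_apply, add_sub_add_comm,
    add_mul]
  exact (norm_add_le _ _).trans (add_le_add (hφ x y) (hψ x y))

theorem sub (hφ : GaugeLipschitz d c φ) (hψ : GaugeLipschitz d c' ψ) :
    GaugeLipschitz d (c + c') (φ - ψ) := fun x y => by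
  rw [BoundedContinuousFunction.sub_apply, BoundedContinuousFunction.sub_apply, sub_sub_sub_comm,
    add_mul]
  exact (norm_sub_le _ _).trans (add_le_add (hφ x y) (hψ x y))

theorem smul {𝕜 : Type*} [NormedField 𝕜] [NormedAlgebra 𝕜 𝔸] (hφ : GaugeLipschitz d c φ) (a : 𝕜) :
    GaugeLipschitz d (‖a‖ * c) (a • φ) := fun x y => by
  rw [BoundedContinuousFunction.smul_apply, BoundedContinuousFunction.smul_apply, ← smul_sub,
    norm_smul, mul_assoc]
  exact mul_le_mul_of_nonneg_left (hφ x y) (norm_nonneg a)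

theorem mul (hd : ∀ x y, 0 ≤ d x y) {b b' : ℝ} (hφ : GaugeLipschitz d c φ)
    (hψ : GaugeLipschitz d c' ψ) (hφb : ‖φ‖ ≤ b) (hψb : ‖ψ‖ ≤ b') (hc : 0 ≤ c) :
    GaugeLipschitz d (b * c' + c * b') (φ * ψ) := fun x y => by
  have hsplit : φ x * ψ x - φ y * ψ y = φ x * (ψ x - ψ y) + (φ x - φ y) * ψ y := by noncomm_ring
  calc ‖(φ * ψ) x - (φ * ψ) y‖ ≤ ‖φ x‖ * ‖ψ x - ψ y‖ + ‖φ x - φ y‖ * ‖ψ y‖ := by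
        rw [BoundedContinuousFunction.mul_apply, BoundedContinuousFunction.mul_apply, hsplit]
        exact (norm_add_le _ _).trans (add_le_add (norm_mul_le _ _) (norm_mul_le _ _))
    _ ≤ b * (c' * d x y) + c * d x y * b' :=
        add_le_add
          (mul_le_mul ((φ.norm_coe_le_norm x).trans hφb) (hψ x y) (norm_nonneg _)
            ((norm_nonneg _).trans hφb))
          (mul_le_mul (hφ x y) ((ψ.norm_coe_le_norm y).trans hψb) (norm_nonneg _)
            (mul_nonneg hc (hd x y)))
    _ = (b * c' + c * b') * d x y := by ring

end GaugeLipschitz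

end GaugeLipschitz

section ExpI

variable {X : Type*} [TopologicalSpace X]

/-- A real observable regarded as a complex one. -/
def complexify : (X →ᵇ ℝ) →L[ℝ] (X →ᵇ ℂ) := Complex.ofRealCLM.compLeftContinuousBounded X

@[simp] theorem complexify_apply (η : X →ᵇ ℝ) (x : X) : complexify η x = (η x : ℂ) := rfl

theorem norm_complexify_le (η : X →ᵇ ℝ) : ‖complexify η‖ ≤ ‖η‖ :=
  (BoundedContinuousFunction.norm_le (norm_nonneg η)).2 fun x => by
    rw [complexify_apply, Complex.norm_real]
    exact η.norm_coe_le_norm x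

theorem gaugeLipschitz_complexify {d : X → X → ℝ} {c : ℝ} {η : X →ᵇ ℝ}
    (hη : GaugeLipschitz d c η) : GaugeLipschitz d c (complexify η) := fun x y => by
  rw [complexify_apply, complexify_apply, ← Complex.ofReal_sub, Complex.norm_real]
  exact hη x y

/-- The unimodular observable `exp (i η)`, by which the transfer operator is twisted. -/
def expI (η : X →ᵇ ℝ) : X →ᵇ ℂ :=
  BoundedContinuousFunction.ofNormedAddCommGroup (fun x => Complex.exp (Complex.I * η x))
    (by fun_prop) 1 fun x => (Complex.norm_exp_I_mul_ofReal _).le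

@[simp] theorem expI_apply (η : X →ᵇ ℝ) (x : X) : expI η x = Complex.exp (Complex.I * η x) := rfl

theorem expI_zero : expI (0 : X →ᵇ ℝ) = 1 := by ext x; simp

theorem expI_add (η ζ : X →ᵇ ℝ) : expI (η + ζ) = expI η * expI ζ := by
  ext x; simp [mul_add, Complex.exp_add]

theorem norm_expI_le_one (η : X →ᵇ ℝ) : ‖expI η‖ ≤ 1 :=
  BoundedContinuousFunction.norm_ofNormedAddCommGroup_le _ zero_le_one _

theorem norm_expI_sub_one_le (η : X →ᵇ ℝ) : ‖expI η - 1‖ ≤ ‖η‖ :=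
  (BoundedContinuousFunction.norm_le (norm_nonneg η)).2 fun _ =>
    Real.norm_exp_I_mul_ofReal_sub_one_le.trans (η.norm_coe_le_norm _)

theorem norm_expI_sub_taylor_one_le {η : X →ᵇ ℝ} (hη : ‖η‖ ≤ 1) :
    ‖expI η - 1 - Complex.I • complexify η‖ ≤ ‖η‖ ^ 2 :=
  (BoundedContinuousFunction.norm_le (sq_nonneg _)).2 fun x => by
    have hx := η.norm_coe_le_norm x
    have hnorm : ‖Complex.I * (η x : ℂ)‖ = ‖η x‖ := by simp
    refine (Complex.norm_exp_sub_one_sub_id_le (hnorm.trans_le (hx.trans hη))).trans ?_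
    rw [hnorm]
    gcongr

theorem norm_expI_sub_taylor_two_le {η : X →ᵇ ℝ} (hη : ‖η‖ ≤ 1) :
    ‖expI η - 1 - Complex.I • complexify η + (2 : ℂ)⁻¹ • complexify η ^ 2‖ ≤ ‖η‖ ^ 3 :=
  (BoundedContinuousFunction.norm_le (by positivity)).2 fun x => by
    have hx := η.norm_coe_le_norm x
    have hnorm : ‖Complex.I * (η x : ℂ)‖ = ‖η x‖ := by simp
    have htaylor := Complex.exp_bound (hnorm.trans_le (hx.trans hη)) (n := 3) (by norm_num)
    rw [hnorm] at htaylor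
    norm_num [Finset.sum_range_succ, Nat.factorial, mul_pow] at htaylor
    calc _ = ‖Complex.exp (Complex.I * η x) - (1 + Complex.I * η x + -(η x : ℂ) ^ 2 / 2)‖ := by
          congr 1; simp; ring
      _ ≤ |η x| ^ 3 * (2 / 9) := htaylor
      _ ≤ |η x| ^ 3 := mul_le_of_le_one_right (by positivity) (by norm_num)
      _ ≤ ‖η‖ ^ 3 := by gcongr; exact hx

theorem gaugeLipschitz_expI {d : X → X → ℝ} {c : ℝ} {η : X →ᵇ ℝ} (hη : GaugeLipschitz d c η) :
    GaugeLipschitz d c (expI η) := fun x y => by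
  have hfactor : Complex.exp (Complex.I * η x) - Complex.exp (Complex.I * η y) =
      Complex.exp (Complex.I * η y) * (Complex.exp (Complex.I * (η x - η y : ℝ)) - 1) := by
    rw [mul_sub, ← Complex.exp_add, mul_one]; push_cast; ring_nf
  rw [expI_apply, expI_apply, hfactor, norm_mul, Complex.norm_exp_I_mul_ofReal, one_mul]
  exact Real.norm_exp_I_mul_ofReal_sub_one_le.trans (hη x y)

theorem norm_exp_I_sub_linear_sub_le {κ a b : ℝ} (ha : |a| ≤ κ) (hb : |b| ≤ κ) :
    ‖(Complex.exp (Complex.I * a) - Complex.I * a) -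
      (Complex.exp (Complex.I * b) - Complex.I * b)‖ ≤ κ * |a - b| := by
  have hderiv (s : ℝ) : HasDerivAt
      (fun s : ℝ => Complex.exp (Complex.I * s) - Complex.I * s)
      (Complex.I * (Complex.exp (Complex.I * s) - 1)) s := by
    have hlin : HasDerivAt (fun s : ℝ => Complex.I * (s : ℂ)) Complex.I s := by
      simpa using (Complex.ofRealCLM.hasDerivAt (x := s)).const_mul Complex.I
    exact (hlin.cexp.sub hlin).congr_deriv (by ring)
  refine Convex.norm_image_sub_le_of_norm_hasDerivWithin_le (s := Set.Icc (-κ) κ)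
    (fun s _ => (hderiv s).hasDerivWithinAt) (fun s hs => ?_) (convex_Icc _ _)
    (abs_le.1 hb) (abs_le.1 ha)
  rw [norm_mul, Complex.norm_I, one_mul]
  exact Real.norm_exp_I_mul_ofReal_sub_one_le.trans (abs_le.2 hs)

theorem gaugeLipschitz_expI_sub_taylor_one {d : X → X → ℝ} {c κ : ℝ} {η : X →ᵇ ℝ}
    (hη : GaugeLipschitz d c η) (hκ : ‖η‖ ≤ κ) :
    GaugeLipschitz d (κ * c) (expI η - 1 - Complex.I • complexify η) := fun x y => by
  have hbound (x : X) : |η x| ≤ κ := (η.norm_coe_le_norm x).trans hκ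
  calc _ = ‖(Complex.exp (Complex.I * η x) - Complex.I * η x) -
          (Complex.exp (Complex.I * η y) - Complex.I * η y)‖ := by congr 1; simp; ring
    _ ≤ κ * |η x - η y| := norm_exp_I_sub_linear_sub_le (hbound x) (hbound y)
    _ ≤ κ * c * d x y := by
        rw [mul_assoc]
        exact mul_le_mul_of_nonneg_left (hη x y) ((norm_nonneg η).trans hκ)

end ExpI

/-! ### Perturbation of an operator with a spectral gap -/

section SpectralGap

variable {X : Type*} [TopologicalSpace X] {L : (X →ᵇ ℂ) →ₗ[ℂ] (X →ᵇ ℂ)}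
  {N : (X →ᵇ ℂ) →ₗ[ℂ] ℂ} {d : X → X → ℝ} {r κ : ℝ}

/-- A Markov operator `L` preserving the mean `N` and contracting oscillations, measured by a
bounded gauge `d`, at rate `r < 1`. This is the form in which the spectral gap of `L` is used. -/
structure HasSpectralGap (L : (X →ᵇ ℂ) →ₗ[ℂ] (X →ᵇ ℂ)) (N : (X →ᵇ ℂ) →ₗ[ℂ] ℂ) (d : X → X → ℝ)
    (r : ℝ) : Prop where
  gauge_nonneg : ∀ x y, 0 ≤ d x y
  gauge_le_one : ∀ x y, d x y ≤ 1
  rate_nonneg : 0 ≤ r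
  rate_lt_one : r < 1
  map_one : L 1 = 1
  mean_one : N 1 = 1
  mean_map : ∀ φ, N (L φ) = N φ
  norm_mean_le : ∀ φ, ‖N φ‖ ≤ ‖φ‖
  gaugeLipschitz_map : ∀ {c φ}, 0 ≤ c → GaugeLipschitz d c φ → GaugeLipschitz d (r * c) (L φ)

/-- The first-order response `∑ₖ Lᵏ η`, `1 ≤ k ≤ n`, of the iterates of `L` to the perturbation
`exp (i η)`. -/
def firstCorrector (L : (X →ᵇ ℂ) →ₗ[ℂ] (X →ᵇ ℂ)) (η : X →ᵇ ℝ) : ℕ → X →ᵇ ℂ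
  | 0 => 0
  | n + 1 => L (firstCorrector L η n + complexify η)

/-- The Green–Kubo sum `N (η²) + 2 ∑ₖ N (η · Lᵏ η)`, `1 ≤ k ≤ n`; it is the increment
of the variance of the Birkhoff sums of `η` at time `n`. -/
def varianceIncrement (L : (X →ᵇ ℂ) →ₗ[ℂ] (X →ᵇ ℂ)) (N : (X →ᵇ ℂ) →ₗ[ℂ] ℂ) (η : X →ᵇ ℝ)
    (n : ℕ) : ℂ :=
  N (complexify η ^ 2) + 2 * N (complexify η * firstCorrector L η n)

/-- The iterates of the twisted operator `φ ↦ L (exp (i η) φ)` on `1`, normalised to have mean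
one. -/
def normalizedIterate (L : (X →ᵇ ℂ) →ₗ[ℂ] (X →ᵇ ℂ)) (N : (X →ᵇ ℂ) →ₗ[ℂ] ℂ) (η : X →ᵇ ℝ) :
    ℕ → X →ᵇ ℂ
  | 0 => 1
  | n + 1 => (N (expI η * normalizedIterate L N η n))⁻¹ • L (expI η * normalizedIterate L N η n)

/-- The factor by which the `(n + 1)`-st application of the twisted operator multiplies the mean of
its iterates on `1`: the finite-time substitute for its leading eigenvalue. -/
def growthFactor (L : (X →ᵇ ℂ) →ₗ[ℂ] (X →ᵇ ℂ)) (N : (X →ᵇ ℂ) →ₗ[ℂ] ℂ) (η : X →ᵇ ℝ) (n : ℕ) : ℂ :=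
  N (expI η * normalizedIterate L N η n)

theorem normalizedIterate_succ_sub_corrector (η : X →ᵇ ℝ) (n : ℕ) :
    normalizedIterate L N η (n + 1) - Complex.I • firstCorrector L η (n + 1) =
      L ((normalizedIterate L N η n - Complex.I • firstCorrector L η n) +
        (expI η * normalizedIterate L N η n - normalizedIterate L N η n -
          Complex.I • complexify η)) +
      ((growthFactor L N η n)⁻¹ - 1) • L (expI η * normalizedIterate L N η n) := by
  simp only [normalizedIterate, firstCorrector, growthFactor, map_add, map_sub, map_smul, sub_smul,
    one_smul, smul_add]
  abel

theorem firstCorrector_eq_sum (η : X →ᵇ ℝ) (n : ℕ) :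
    firstCorrector L η n = ∑ k ∈ Finset.range n, L^[k] (L (complexify η)) := by
  induction n with
  | zero => rfl
  | succ n ih =>
    rw [firstCorrector, Finset.sum_range_succ', map_add, ih, map_sum]
    simp only [Function.iterate_succ_apply', Function.iterate_zero, id]

theorem firstCorrector_smul (η : X →ᵇ ℝ) (t : ℝ) (n : ℕ) :
    firstCorrector L (t • η) n = (t : ℂ) • firstCorrector L η n := by
  have hcomplexify : complexify (t • η) = (t : ℂ) • complexify η := by ext x; simp
  induction n with
  | zero => simp [firstCorrector]
  | succ n ih => rw [firstCorrector, firstCorrector, ih, hcomplexify, ← smul_add, map_smul]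

theorem varianceIncrement_smul (η : X →ᵇ ℝ) (t : ℝ) (n : ℕ) :
    varianceIncrement L N (t • η) n = (t : ℂ) ^ 2 * varianceIncrement L N η n := by
  have hcomplexify : complexify (t • η) = (t : ℂ) • complexify η := by ext x; simp
  rw [varianceIncrement, varianceIncrement, firstCorrector_smul, hcomplexify, smul_pow,
    smul_mul_smul_comm, map_smul, map_smul, smul_eq_mul, smul_eq_mul]
  ring

namespace HasSpectralGap

theorem norm_le_of_mean_eq_zero (H : HasSpectralGap L N d r) {φ : X →ᵇ ℂ} {c : ℝ} (hc : 0 ≤ c)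
    (hφ : GaugeLipschitz d c φ) (hmean : N φ = 0) : ‖φ‖ ≤ c :=
  (BoundedContinuousFunction.norm_le hc).2 fun x => by
    have hconst : N (φ x • 1) = φ x := by rw [map_smul, H.mean_one, smul_eq_mul, mul_one]
    calc ‖φ x‖ = ‖N (φ x • 1 - φ)‖ := by rw [map_sub, hconst, hmean, sub_zero]
      _ ≤ ‖φ x • 1 - φ‖ := H.norm_mean_le _
      _ ≤ c := (BoundedContinuousFunction.norm_le hc).2 fun y => by
        have := (hφ x y).trans (mul_le_of_le_one_right hc (H.gauge_le_one x y))
        simpa using this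

theorem mean_firstCorrector (H : HasSpectralGap L N d r) {η : X →ᵇ ℝ}
    (hmean : N (complexify η) = 0) (n : ℕ) : N (firstCorrector L η n) = 0 := by
  induction n with
  | zero => exact map_zero N
  | succ n ih => rw [firstCorrector, H.mean_map, map_add, ih, hmean, add_zero]

theorem gaugeLipschitz_firstCorrector_succ_sub (H : HasSpectralGap L N d r) {η : X →ᵇ ℝ} {K : ℝ}
    (hK : 0 ≤ K) (hlip : GaugeLipschitz d K η) (n : ℕ) :
    GaugeLipschitz d (r ^ (n + 1) * K) (firstCorrector L η (n + 1) - firstCorrector L η n) := by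
  induction n with
  | zero =>
    simpa [firstCorrector] using H.gaugeLipschitz_map hK (gaugeLipschitz_complexify hlip)
  | succ n ih =>
    have hstep : firstCorrector L η (n + 2) - firstCorrector L η (n + 1) =
        L (firstCorrector L η (n + 1) - firstCorrector L η n) := by
      simp only [firstCorrector, ← map_sub, add_sub_add_right_eq_sub]
    rw [hstep, pow_succ', mul_assoc]
    exact H.gaugeLipschitz_map (mul_nonneg (pow_nonneg H.rate_nonneg _) hK) ih

theorem norm_varianceIncrement_succ_sub_le (H : HasSpectralGap L N d r) {η : X →ᵇ ℝ} {K : ℝ}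
    (hη : ‖η‖ ≤ K) (hlip : GaugeLipschitz d K η) (hmean : N (complexify η) = 0) (n : ℕ) :
    ‖varianceIncrement L N η (n + 1) - varianceIncrement L N η n‖ ≤ 2 * K ^ 2 * r ^ (n + 1) := by
  have hK : 0 ≤ K := (norm_nonneg η).trans hη
  have hg : ‖firstCorrector L η (n + 1) - firstCorrector L η n‖ ≤ r ^ (n + 1) * K :=
    H.norm_le_of_mean_eq_zero (mul_nonneg (pow_nonneg H.rate_nonneg _) hK)
      (H.gaugeLipschitz_firstCorrector_succ_sub hK hlip n)
      (by rw [map_sub, H.mean_firstCorrector hmean, H.mean_firstCorrector hmean, sub_zero])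
  calc ‖varianceIncrement L N η (n + 1) - varianceIncrement L N η n‖
      = ‖2 * N (complexify η * (firstCorrector L η (n + 1) - firstCorrector L η n))‖ := by
        rw [varianceIncrement, varianceIncrement, add_sub_add_left_eq_sub, ← mul_sub,
          ← map_sub, ← mul_sub]
    _ ≤ 2 * (‖complexify η‖ * ‖firstCorrector L η (n + 1) - firstCorrector L η n‖) := by
        rw [norm_mul, Complex.norm_ofNat]
        gcongr
        exact (H.norm_mean_le _).trans (norm_mul_le _ _)
    _ ≤ 2 * (K * (r ^ (n + 1) * K)) := by
        gcongr
        exact (norm_complexify_le η).trans hη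
    _ = 2 * K ^ 2 * r ^ (n + 1) := by ring

end HasSpectralGap

/-- A mean-zero observable of size `κ`, small relative to the spectral gap `1 - r`. -/
structure SmallObservable (N : (X →ᵇ ℂ) →ₗ[ℂ] ℂ) (d : X → X → ℝ) (r κ : ℝ) (η : X →ᵇ ℝ) : Prop where
  norm_le : ‖η‖ ≤ κ
  gaugeLipschitz : GaugeLipschitz d κ η
  mean_eq_zero : N (complexify η) = 0
  small : 8 * κ ≤ 1 - r

theorem smallObservable_smul {K : ℝ} {η : X →ᵇ ℝ} (hη : ‖η‖ ≤ K) (hlip : GaugeLipschitz d K η)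
    (hmean : N (complexify η) = 0) {t : ℝ} (ht : 0 ≤ t) (hsmall : 8 * (t * K) ≤ 1 - r) :
    SmallObservable N d r (t * K) (t • η) where
  norm_le := by
    rw [norm_smul, Real.norm_of_nonneg ht]
    exact mul_le_mul_of_nonneg_left hη ht
  gaugeLipschitz := by simpa only [Real.norm_of_nonneg ht] using hlip.smul t
  mean_eq_zero := by
    have hcomplexify : complexify (t • η) = (t : ℂ) • complexify η := by ext x; simp
    rw [hcomplexify, map_smul, hmean, smul_zero]
  small := hsmall

namespace SmallObservable

variable {η : X →ᵇ ℝ}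

theorem nonneg (O : SmallObservable N d r κ η) : 0 ≤ κ := (norm_nonneg η).trans O.norm_le

theorem le_one_eighth (O : SmallObservable N d r κ η) (hr : 0 ≤ r) : κ ≤ 1 / 8 := by
  linarith [O.small]

theorem gap_const_mul_le (H : HasSpectralGap L N d r) (O : SmallObservable N d r κ η) :
    4 / (1 - r) * κ ≤ 1 / 2 := by
  rw [div_mul_eq_mul_div, div_le_iff₀ (sub_pos.2 H.rate_lt_one)]
  linarith [O.small]

theorem norm_sub_one_le (H : HasSpectralGap L N d r) (O : SmallObservable N d r κ η) {h : X →ᵇ ℂ}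
    (hmean : N h = 1) (hlip : GaugeLipschitz d (4 / (1 - r) * κ) h) :
    ‖h - 1‖ ≤ 4 / (1 - r) * κ := by
  have hc : 0 ≤ 4 / (1 - r) * κ :=
    mul_nonneg (div_nonneg zero_le_four (sub_pos.2 H.rate_lt_one).le) O.nonneg
  refine H.norm_le_of_mean_eq_zero hc ?_ (by rw [map_sub, hmean, H.mean_one, sub_self])
  simpa only [add_zero] using hlip.sub (gaugeLipschitz_one d)

theorem norm_le_three_halves (H : HasSpectralGap L N d r) (O : SmallObservable N d r κ η)
    {h : X →ᵇ ℂ} (hmean : N h = 1) (hlip : GaugeLipschitz d (4 / (1 - r) * κ) h) :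
    ‖h‖ ≤ 3 / 2 := by
  have hone : ‖(1 : X →ᵇ ℂ)‖ ≤ 1 :=
    (BoundedContinuousFunction.norm_const_le (1 : ℂ)).trans_eq norm_one
  have htri := norm_add_le (h - 1) 1
  rw [sub_add_cancel] at htri
  linarith [O.norm_sub_one_le H hmean hlip, O.gap_const_mul_le H]

theorem norm_mean_twist_sub_one_le (H : HasSpectralGap L N d r) (O : SmallObservable N d r κ η)
    {h : X →ᵇ ℂ} (hmean : N h = 1) (hlip : GaugeLipschitz d (4 / (1 - r) * κ) h) :
    ‖N (expI η * h) - 1‖ ≤ 3 / 2 * κ := by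
  have htwist : N (expI η * h) - 1 = N ((expI η - 1) * h) := by
    rw [sub_one_mul, map_sub, hmean]
  calc ‖N (expI η * h) - 1‖ ≤ ‖expI η - 1‖ * ‖h‖ := by
        rw [htwist]; exact (H.norm_mean_le _).trans (norm_mul_le _ _)
    _ ≤ κ * (3 / 2) := mul_le_mul ((norm_expI_sub_one_le η).trans O.norm_le)
        (O.norm_le_three_halves H hmean hlip) (norm_nonneg _) O.nonneg
    _ = 3 / 2 * κ := mul_comm _ _

theorem mean_twist_ne_zero (H : HasSpectralGap L N d r) (O : SmallObservable N d r κ η)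
    {h : X →ᵇ ℂ} (hmean : N h = 1) (hlip : GaugeLipschitz d (4 / (1 - r) * κ) h) :
    N (expI η * h) ≠ 0 := fun hzero => by
  have hle := O.norm_mean_twist_sub_one_le H hmean hlip
  rw [hzero, zero_sub, norm_neg, norm_one] at hle
  linarith [O.le_one_eighth H.rate_nonneg]

theorem norm_inv_mean_twist_le (H : HasSpectralGap L N d r) (O : SmallObservable N d r κ η)
    {h : X →ᵇ ℂ} (hmean : N h = 1) (hlip : GaugeLipschitz d (4 / (1 - r) * κ) h) :
    ‖(N (expI η * h))⁻¹‖ ≤ 1 + 4 * κ := by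
  have hκ := O.le_one_eighth H.rate_nonneg
  have hlower : 1 - 3 / 2 * κ ≤ ‖N (expI η * h)‖ := by
    have htri := norm_sub_norm_le (1 : ℂ) (1 - N (expI η * h))
    rw [norm_one, norm_sub_rev, sub_sub_cancel] at htri
    linarith [O.norm_mean_twist_sub_one_le H hmean hlip]
  rw [norm_inv, inv_le_iff_one_le_mul₀ (norm_pos_iff.2 (O.mean_twist_ne_zero H hmean hlip))]
  nlinarith [O.nonneg]

theorem norm_inv_mean_twist_sub_one_le (H : HasSpectralGap L N d r)
    (O : SmallObservable N d r κ η) {h : X →ᵇ ℂ} (hmean : N h = 1)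
    (hlip : GaugeLipschitz d (4 / (1 - r) * κ) h) : ‖(N (expI η * h))⁻¹ - 1‖ ≤ 4 * κ := by
  have hfactor : (N (expI η * h))⁻¹ - 1 = -((N (expI η * h) - 1) * (N (expI η * h))⁻¹) := by
    rw [sub_mul, mul_inv_cancel₀ (O.mean_twist_ne_zero H hmean hlip)]; ring
  rw [hfactor, norm_neg, norm_mul]
  calc _ ≤ 3 / 2 * κ * (1 + 4 * κ) :=
        mul_le_mul (O.norm_mean_twist_sub_one_le H hmean hlip)
          (O.norm_inv_mean_twist_le H hmean hlip) (norm_nonneg _) (by linarith [O.nonneg])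
    _ ≤ 4 * κ := by nlinarith [O.nonneg, O.le_one_eighth H.rate_nonneg]

theorem gaugeLipschitz_twist (H : HasSpectralGap L N d r) (O : SmallObservable N d r κ η)
    {h : X →ᵇ ℂ} (hmean : N h = 1) (hlip : GaugeLipschitz d (4 / (1 - r) * κ) h) :
    GaugeLipschitz d ((3 / 2 + 4 / (1 - r)) * κ) (expI η * h) :=
  ((gaugeLipschitz_expI O.gaugeLipschitz).mul H.gauge_nonneg hlip (norm_expI_le_one η)
    (O.norm_le_three_halves H hmean hlip) O.nonneg).mono H.gauge_nonneg (le_of_eq (by ring))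

theorem gaugeLipschitz_normalized_twist (H : HasSpectralGap L N d r)
    (O : SmallObservable N d r κ η) {h : X →ᵇ ℂ} (hmean : N h = 1)
    (hlip : GaugeLipschitz d (4 / (1 - r) * κ) h) :
    GaugeLipschitz d (4 / (1 - r) * κ) ((N (expI η * h))⁻¹ • L (expI η * h)) := by
  have hgap : 0 < 1 - r := sub_pos.2 H.rate_lt_one
  have hc : 0 ≤ (3 / 2 + 4 / (1 - r)) * κ := mul_nonneg (by positivity) O.nonneg
  have hrate : (1 + 4 * κ) * r ≤ (1 + r) / 2 := by nlinarith [O.small, H.rate_nonneg]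
  have hA : 4 / (1 - r) * (1 - r) = 4 := div_mul_cancel₀ _ hgap.ne'
  refine ((H.gaugeLipschitz_map hc (O.gaugeLipschitz_twist H hmean hlip)).smul
    (N (expI η * h))⁻¹).mono H.gauge_nonneg ?_
  calc ‖(N (expI η * h))⁻¹‖ * (r * ((3 / 2 + 4 / (1 - r)) * κ))
      ≤ (1 + 4 * κ) * (r * ((3 / 2 + 4 / (1 - r)) * κ)) :=
        mul_le_mul_of_nonneg_right (O.norm_inv_mean_twist_le H hmean hlip)
          (mul_nonneg H.rate_nonneg hc)
    _ = (1 + 4 * κ) * r * ((3 / 2 + 4 / (1 - r)) * κ) := (mul_assoc _ _ _).symm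
    _ ≤ (1 + r) / 2 * ((3 / 2 + 4 / (1 - r)) * κ) := mul_le_mul_of_nonneg_right hrate hc
    _ ≤ 4 / (1 - r) * κ := by
        rw [← mul_assoc]
        exact mul_le_mul_of_nonneg_right (by linarith [H.rate_lt_one]) O.nonneg

theorem mean_normalizedIterate_and_gaugeLipschitz (H : HasSpectralGap L N d r)
    (O : SmallObservable N d r κ η) (n : ℕ) : N (normalizedIterate L N η n) = 1 ∧
      GaugeLipschitz d (4 / (1 - r) * κ) (normalizedIterate L N η n) := by
  induction n with
  | zero =>
    exact ⟨H.mean_one, (gaugeLipschitz_one d).mono H.gauge_nonneg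
      (mul_nonneg (div_nonneg zero_le_four (sub_pos.2 H.rate_lt_one).le) O.nonneg)⟩
  | succ n ih =>
    refine ⟨?_, O.gaugeLipschitz_normalized_twist H ih.1 ih.2⟩
    rw [normalizedIterate, map_smul, H.mean_map, smul_eq_mul,
      inv_mul_cancel₀ (O.mean_twist_ne_zero H ih.1 ih.2)]

theorem twist_iterate_one (H : HasSpectralGap L N d r) (O : SmallObservable N d r κ η) (n : ℕ) :
    (fun φ => L (expI η * φ))^[n] 1 =
      (∏ k ∈ Finset.range n, growthFactor L N η k) • normalizedIterate L N η n := by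
  induction n with
  | zero => simp [normalizedIterate]
  | succ n ih =>
    obtain ⟨hmean, hlip⟩ := O.mean_normalizedIterate_and_gaugeLipschitz H n
    rw [Function.iterate_succ_apply', ih, mul_smul_comm, map_smul, normalizedIterate, smul_smul,
      Finset.prod_range_succ, growthFactor,
      mul_inv_cancel_right₀ (O.mean_twist_ne_zero H hmean hlip)]

theorem norm_taylor_one_le (O : SmallObservable N d r κ η) (hr : 0 ≤ r) :
    ‖expI η - 1 - Complex.I • complexify η‖ ≤ κ ^ 2 :=
  (norm_expI_sub_taylor_one_le (O.norm_le.trans (by linarith [O.le_one_eighth hr]))).trans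
    (pow_le_pow_left₀ (norm_nonneg _) O.norm_le 2)

theorem norm_taylor_two_le (O : SmallObservable N d r κ η) (hr : 0 ≤ r) :
    ‖expI η - 1 - Complex.I • complexify η + (2 : ℂ)⁻¹ • complexify η ^ 2‖ ≤ κ ^ 3 :=
  (norm_expI_sub_taylor_two_le (O.norm_le.trans (by linarith [O.le_one_eighth hr]))).trans
    (pow_le_pow_left₀ (norm_nonneg _) O.norm_le 3)

theorem gaugeLipschitz_twist_sub_linear (H : HasSpectralGap L N d r)
    (O : SmallObservable N d r κ η) {h : X →ᵇ ℂ} (hmean : N h = 1)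
    (hlip : GaugeLipschitz d (4 / (1 - r) * κ) h) :
    GaugeLipschitz d ((1 + 2 * (4 / (1 - r))) * κ ^ 2)
      (expI η * h - h - Complex.I • complexify η) := by
  have hsplit : expI η * h - h - Complex.I • complexify η =
      (expI η - 1 - Complex.I • complexify η) + (expI η - 1) * (h - 1) := by ring
  have hlin := gaugeLipschitz_expI_sub_taylor_one O.gaugeLipschitz O.norm_le
  have hprod := ((gaugeLipschitz_expI O.gaugeLipschitz).sub (gaugeLipschitz_one d)).mul
    H.gauge_nonneg (hlip.sub (gaugeLipschitz_one d))
    ((norm_expI_sub_one_le η).trans O.norm_le) (O.norm_sub_one_le H hmean hlip)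
    (by linarith [O.nonneg])
  rw [hsplit]
  exact (hlin.add hprod).mono H.gauge_nonneg (le_of_eq (by ring))

theorem gaugeLipschitz_normalizedIterate_sub_corrector (H : HasSpectralGap L N d r)
    (O : SmallObservable N d r κ η) (n : ℕ) :
    GaugeLipschitz d (33 / (1 - r) ^ 2 * κ ^ 2)
      (normalizedIterate L N η n - Complex.I • firstCorrector L η n) := by
  have hgap : 0 < 1 - r := sub_pos.2 H.rate_lt_one
  induction n with
  | zero =>
    simpa [normalizedIterate, firstCorrector] using
      (gaugeLipschitz_one d).mono H.gauge_nonneg (by positivity)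
  | succ n ih =>
    obtain ⟨hmean, hlip⟩ := O.mean_normalizedIterate_and_gaugeLipschitz H n
    have hκ := O.nonneg
    have hr := H.rate_nonneg
    have hfirst := H.gaugeLipschitz_map (by positivity)
      (ih.add (O.gaugeLipschitz_twist_sub_linear H hmean hlip))
    have hsecond := (H.gaugeLipschitz_map (by positivity)
      (O.gaugeLipschitz_twist H hmean hlip)).smul ((growthFactor L N η n)⁻¹ - 1)
    rw [normalizedIterate_succ_sub_corrector]
    refine (hfirst.add hsecond).mono H.gauge_nonneg ?_
    calc _ ≤ r * (33 / (1 - r) ^ 2 * κ ^ 2 + (1 + 2 * (4 / (1 - r))) * κ ^ 2) +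
          4 * κ * (r * ((3 / 2 + 4 / (1 - r)) * κ)) := by
          gcongr
          exact O.norm_inv_mean_twist_sub_one_le H hmean hlip
      _ = r * (33 / (1 - r) ^ 2 + 7 + 24 / (1 - r)) * κ ^ 2 := by ring
      _ ≤ 33 / (1 - r) ^ 2 * κ ^ 2 := by
          refine mul_le_mul_of_nonneg_right ?_ (sq_nonneg κ)
          rw [show 33 / (1 - r) ^ 2 + 7 + 24 / (1 - r) =
            (33 + 7 * (1 - r) ^ 2 + 24 * (1 - r)) / (1 - r) ^ 2 by field_simp, ← mul_div_assoc]
          gcongr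
          nlinarith [mul_nonneg hr hgap.le, mul_nonneg (mul_nonneg hr hgap.le) hr]

theorem growthFactor_sub_eq (H : HasSpectralGap L N d r) (O : SmallObservable N d r κ η) (n : ℕ) :
    growthFactor L N η n - (1 - varianceIncrement L N η n / 2) =
      N (expI η - 1 - Complex.I • complexify η + (2 : ℂ)⁻¹ • complexify η ^ 2) +
      N ((expI η - 1 - Complex.I • complexify η) * (normalizedIterate L N η n - 1)) +
      Complex.I * N (complexify η *
        (normalizedIterate L N η n - 1 - Complex.I • firstCorrector L η n)) := by
  have hmean := (O.mean_normalizedIterate_and_gaugeLipschitz H n).1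
  rw [growthFactor, varianceIncrement]
  simp only [mul_sub, sub_mul, mul_one, one_mul, map_sub, map_add, map_smul, smul_eq_mul,
    mul_smul_comm, smul_mul_assoc, hmean, H.mean_one, O.mean_eq_zero]
  linear_combination N (complexify η * firstCorrector L η n) * Complex.I_sq

theorem norm_growthFactor_sub_le (H : HasSpectralGap L N d r) (O : SmallObservable N d r κ η)
    (n : ℕ) : ‖growthFactor L N η n - (1 - varianceIncrement L N η n / 2)‖ ≤
      38 / (1 - r) ^ 2 * κ ^ 3 := by
  have hgap : 0 < 1 - r := sub_pos.2 H.rate_lt_one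
  have hκ := O.nonneg
  obtain ⟨hmean, hlip⟩ := O.mean_normalizedIterate_and_gaugeLipschitz H n
  have hresidual : ‖normalizedIterate L N η n - 1 - Complex.I • firstCorrector L η n‖ ≤
      33 / (1 - r) ^ 2 * κ ^ 2 := by
    refine H.norm_le_of_mean_eq_zero (by positivity) ?_ ?_
    · simpa only [add_zero, sub_right_comm] using
        (O.gaugeLipschitz_normalizedIterate_sub_corrector H n).sub (gaugeLipschitz_one d)
    · rw [map_sub, map_sub, map_smul, hmean, H.mean_one, H.mean_firstCorrector O.mean_eq_zero,
        sub_self, smul_zero, sub_zero]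
  have hη : ‖complexify η‖ ≤ κ := (norm_complexify_le η).trans O.norm_le
  rw [O.growthFactor_sub_eq H]
  refine (norm_add₃_le).trans ?_
  rw [norm_mul, Complex.norm_I, one_mul]
  calc _ ≤ κ ^ 3 + κ ^ 2 * (4 / (1 - r) * κ) + κ * (33 / (1 - r) ^ 2 * κ ^ 2) := by
        gcongr
        · exact (H.norm_mean_le _).trans (O.norm_taylor_two_le H.rate_nonneg)
        · exact (H.norm_mean_le _).trans ((norm_mul_le _ _).trans
            (mul_le_mul (O.norm_taylor_one_le H.rate_nonneg) (O.norm_sub_one_le H hmean hlip)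
              (norm_nonneg _) (sq_nonneg κ)))
        · exact (H.norm_mean_le _).trans ((norm_mul_le _ _).trans
            (mul_le_mul hη hresidual (norm_nonneg _) hκ))
    _ = ((1 - r) ^ 2 + 4 * (1 - r) + 33) / (1 - r) ^ 2 * κ ^ 3 := by field_simp
    _ ≤ 38 / (1 - r) ^ 2 * κ ^ 3 := by
        gcongr
        nlinarith [H.rate_nonneg]

end SmallObservable

end SpectralGap

/-! ### Products of nearly Gaussian factors -/

section GaussianProducts

theorem norm_prod_range_le_exp {R : Type*} [NormedCommRing R] [NormOneClass R] {a : ℕ → R} {β : ℝ}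
    {δ : ℕ → ℝ} (ha : ∀ k, ‖a k‖ ≤ Real.exp (-β + δ k)) (n : ℕ) :
    ‖∏ k ∈ Finset.range n, a k‖ ≤ Real.exp (-β * n + ∑ k ∈ Finset.range n, δ k) :=
  calc ‖∏ k ∈ Finset.range n, a k‖ ≤ ∏ k ∈ Finset.range n, Real.exp (-β + δ k) :=
        (Finset.norm_prod_le _ _).trans
          (Finset.prod_le_prod (fun _ _ => norm_nonneg _) fun k _ => ha k)
    _ = Real.exp (-β * n + ∑ k ∈ Finset.range n, δ k) := by
        rw [← Real.exp_sum, Finset.sum_add_distrib, Finset.sum_const, Finset.card_range,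
          nsmul_eq_mul, mul_comm]

theorem norm_prod_range_sub_pow_le {R : Type*} [NormedCommRing R] [NormOneClass R] {a : ℕ → R}
    {q : R} {β : ℝ} {δ : ℕ → ℝ} (hq : ‖q‖ ≤ Real.exp (-β)) (hδ : ∀ k, 0 ≤ δ k)
    (ha : ∀ k, ‖a k‖ ≤ Real.exp (-β + δ k)) (n : ℕ) :
    ‖∏ k ∈ Finset.range n, a k - q ^ n‖ ≤ (∑ k ∈ Finset.range n, ‖a k - q‖) *
      Real.exp (β - β * n + ∑ k ∈ Finset.range n, δ k) := by
  induction n with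
  | zero => simp
  | succ n ih =>
    have htelescope : (∏ k ∈ Finset.range n, a k) * a n - q ^ n * q =
        (∏ k ∈ Finset.range n, a k) * (a n - q) + (∏ k ∈ Finset.range n, a k - q ^ n) * q := by
      ring
    rw [Finset.prod_range_succ, Finset.sum_range_succ, Finset.sum_range_succ, pow_succ, htelescope]
    set P := ∏ k ∈ Finset.range n, a k
    set Δ := ∑ k ∈ Finset.range n, δ k
    set ε := ∑ k ∈ Finset.range n, ‖a k - q‖
    have : 0 ≤ ε := Finset.sum_nonneg fun _ _ => norm_nonneg _
    calc ‖P * (a n - q) + (P - q ^ n) * q‖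
        ≤ ‖P‖ * ‖a n - q‖ + ‖P - q ^ n‖ * ‖q‖ :=
          (norm_add_le _ _).trans (add_le_add (norm_mul_le _ _) (norm_mul_le _ _))
      _ ≤ Real.exp (-β * n + Δ) * ‖a n - q‖ +
          ε * Real.exp (β - β * n + Δ) * Real.exp (-β) := by
          gcongr
          exact norm_prod_range_le_exp ha n
      _ = (ε + ‖a n - q‖) * Real.exp (-β * n + Δ) := by
          rw [mul_assoc, ← Real.exp_add]; ring_nf
      _ ≤ (ε + ‖a n - q‖) * Real.exp (β - β * (n + 1 : ℕ) + (Δ + δ n)) := by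
          gcongr
          · push_cast; linarith
          · exact le_add_of_nonneg_right (hδ n)

theorem sum_range_pow_le {r : ℝ} (hr : 0 ≤ r) (hr1 : r < 1) (n : ℕ) :
    ∑ k ∈ Finset.range n, r ^ k ≤ (1 - r)⁻¹ :=
  ((summable_geometric_of_lt_one hr hr1).sum_le_tsum _ fun _ _ => pow_nonneg hr _).trans_eq
    (tsum_geometric_of_lt_one hr hr1)

theorem norm_sub_quadratic_le {s C t ρ : ℝ} {a v : ℂ} (hv : ‖v - s‖ ≤ C * ρ)
    (ha : ‖a - (1 - t ^ 2 * v / 2)‖ ≤ C * t ^ 3) :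
    ‖a - ((1 - s * t ^ 2 / 2 : ℝ) : ℂ)‖ ≤ C * t ^ 3 + C * t ^ 2 * ρ := by
  have hsplit : a - ((1 - s * t ^ 2 / 2 : ℝ) : ℂ) =
      (a - (1 - t ^ 2 * v / 2)) - ((t ^ 2 / 2 : ℝ) : ℂ) * (v - s) := by push_cast; ring
  have hquad : ‖((t ^ 2 / 2 : ℝ) : ℂ) * (v - s)‖ ≤ t ^ 2 * (C * ρ) := by
    rw [norm_mul, Complex.norm_real, Real.norm_of_nonneg (by positivity)]
    exact mul_le_mul (by linarith [sq_nonneg t]) hv (norm_nonneg _) (sq_nonneg t)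
  rw [hsplit]
  linarith [norm_sub_le (a - (1 - t ^ 2 * v / 2)) (((t ^ 2 / 2 : ℝ) : ℂ) * (v - s))]

/-- The scales `t` at which a factor `1 - s t² / 2 + O(C t³)` has modulus at most
`exp (-s t² / 4)`. -/
structure SmallScale (s C t : ℝ) : Prop where
  pos : 0 < t
  le_one : t ≤ 1
  mul_sq_le_one : s * t ^ 2 ≤ 1
  mul_le : C * t ≤ s / 4

theorem exists_forall_smallScale {s C t₀ : ℝ} (hs : 0 < s) (hC : 0 ≤ C) (ht₀ : 0 < t₀) :
    ∃ T, 0 < T ∧ T ≤ t₀ ∧ ∀ t, 0 < t → t ≤ T → SmallScale s C t := by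
  refine ⟨min t₀ (min 1 (min s⁻¹ (s / 4 / (C + 1)))), by positivity, min_le_left _ _,
    fun t ht htT => ?_⟩
  simp only [le_min_iff] at htT
  obtain ⟨-, h_one, h_inv, h_div⟩ := htT
  rw [le_div_iff₀ (by positivity)] at h_div
  refine ⟨ht, h_one, ?_, by linarith⟩
  calc s * t ^ 2 ≤ s * (s⁻¹ * 1) := by rw [sq]; gcongr
    _ = 1 := by field_simp

namespace SmallScale

variable {s C t ρ : ℝ} {a v : ℂ}

theorem abs_exp_sub_quadratic_le (S : SmallScale s C t) (hs : 0 ≤ s) :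
    |Real.exp (-(s * t ^ 2 / 2)) - (1 - s * t ^ 2 / 2)| ≤ s ^ 2 * t ^ 3 := by
  have hst : 0 ≤ s * t ^ 2 / 2 := by positivity
  have htaylor := Real.abs_exp_sub_one_sub_id_le (x := -(s * t ^ 2 / 2)) (by
    rw [abs_neg, abs_of_nonneg hst]; linarith [S.mul_sq_le_one])
  calc _ = |Real.exp (-(s * t ^ 2 / 2)) - 1 - -(s * t ^ 2 / 2)| := by ring_nf
    _ ≤ (-(s * t ^ 2 / 2)) ^ 2 := htaylor
    _ = s ^ 2 * t ^ 3 * (t / 4) := by ring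
    _ ≤ s ^ 2 * t ^ 3 := mul_le_of_le_one_right
        (mul_nonneg (sq_nonneg s) (pow_nonneg S.pos.le 3)) (by linarith [S.le_one])

theorem norm_sub_exp_le (S : SmallScale s C t) (hs : 0 ≤ s) (hv : ‖v - s‖ ≤ C * ρ)
    (ha : ‖a - (1 - t ^ 2 * v / 2)‖ ≤ C * t ^ 3) :
    ‖a - (Real.exp (-(s * t ^ 2 / 2)) : ℂ)‖ ≤ (C + s ^ 2) * t ^ 3 + C * t ^ 2 * ρ := by
  have htri := norm_sub_le_norm_sub_add_norm_sub a ((1 - s * t ^ 2 / 2 : ℝ) : ℂ)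
    (Real.exp (-(s * t ^ 2 / 2)) : ℂ)
  rw [← Complex.ofReal_sub, Complex.norm_real, Real.norm_eq_abs, abs_sub_comm] at htri
  linarith [norm_sub_quadratic_le hv ha, S.abs_exp_sub_quadratic_le hs]

theorem norm_le_exp (S : SmallScale s C t) (hv : ‖v - s‖ ≤ C * ρ)
    (ha : ‖a - (1 - t ^ 2 * v / 2)‖ ≤ C * t ^ 3) :
    ‖a‖ ≤ Real.exp (-(s * t ^ 2 / 4) + C * t ^ 2 * ρ) := by
  have htri := norm_le_norm_sub_add a ((1 - s * t ^ 2 / 2 : ℝ) : ℂ)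
  rw [Complex.norm_real, Real.norm_of_nonneg (by linarith [S.mul_sq_le_one])] at htri
  have hcubic : C * t ^ 3 ≤ s * t ^ 2 / 4 := by
    linarith [mul_le_mul_of_nonneg_right S.mul_le (sq_nonneg t)]
  linarith [norm_sub_quadratic_le hv ha, Real.add_one_le_exp (-(s * t ^ 2 / 4) + C * t ^ 2 * ρ)]

theorem norm_prod_sub_exp_pow_le (S : SmallScale s C t) (hs : 0 ≤ s) (hC : 0 ≤ C) {r : ℝ}
    (hr : 0 ≤ r) (hr1 : r < 1) {a v : ℕ → ℂ} (hv : ∀ k, ‖v k - s‖ ≤ C * r ^ k)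
    (ha : ∀ k, ‖a k - (1 - t ^ 2 * v k / 2)‖ ≤ C * t ^ 3) (n : ℕ) :
    ‖∏ k ∈ Finset.range n, a k - (Real.exp (-(s * t ^ 2 / 2)) : ℂ) ^ n‖ ≤
      (C + s ^ 2) * (1 - r)⁻¹ * Real.exp (s + C * (1 - r)⁻¹) *
        ((n * t ^ 3 + t ^ 2) * Real.exp (-(s / 4) * (n * t ^ 2))) := by
  have ht := S.pos
  have ht2 : t ^ 2 ≤ 1 := pow_le_one₀ ht.le S.le_one
  have hgap : 1 ≤ (1 - r)⁻¹ := (one_le_inv₀ (sub_pos.2 hr1)).2 (by linarith)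
  have hgap0 : 0 ≤ (1 - r)⁻¹ := zero_le_one.trans hgap
  have hq : ‖(Real.exp (-(s * t ^ 2 / 2)) : ℂ)‖ ≤ Real.exp (-(s * t ^ 2 / 4)) := by
    rw [Complex.norm_real, Real.norm_of_nonneg (Real.exp_pos _).le, Real.exp_le_exp]
    linarith [mul_nonneg hs (sq_nonneg t)]
  have hδ : ∑ k ∈ Finset.range n, C * t ^ 2 * r ^ k ≤ C * t ^ 2 * (1 - r)⁻¹ := by
    rw [← Finset.mul_sum]
    exact mul_le_mul_of_nonneg_left (sum_range_pow_le hr hr1 n) (by positivity)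
  have herror : ∑ k ∈ Finset.range n, ‖a k - (Real.exp (-(s * t ^ 2 / 2)) : ℂ)‖ ≤
      (C + s ^ 2) * (1 - r)⁻¹ * (n * t ^ 3 + t ^ 2) := calc
    _ ≤ ∑ k ∈ Finset.range n, ((C + s ^ 2) * t ^ 3 + C * t ^ 2 * r ^ k) :=
        Finset.sum_le_sum fun k _ => S.norm_sub_exp_le hs (hv k) (ha k)
    _ ≤ n * ((C + s ^ 2) * t ^ 3) * 1 + C * t ^ 2 * (1 - r)⁻¹ := by
        rw [Finset.sum_add_distrib, Finset.sum_const, Finset.card_range, nsmul_eq_mul, mul_one]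
        exact add_le_add_right hδ _
    _ ≤ n * ((C + s ^ 2) * t ^ 3) * (1 - r)⁻¹ + (C + s ^ 2) * t ^ 2 * (1 - r)⁻¹ := by
        gcongr
        exact le_add_of_nonneg_right (sq_nonneg s)
    _ = (C + s ^ 2) * (1 - r)⁻¹ * (n * t ^ 3 + t ^ 2) := by ring
  have hdecay : s * t ^ 2 / 4 - s * t ^ 2 / 4 * n + ∑ k ∈ Finset.range n, C * t ^ 2 * r ^ k ≤
      s + C * (1 - r)⁻¹ + -(s / 4) * (n * t ^ 2) := by
    linarith [mul_le_of_le_one_right hs ht2, mul_le_of_le_one_right (mul_nonneg hC hgap0) ht2]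
  refine (norm_prod_range_sub_pow_le hq (fun k => by positivity)
    (fun k => S.norm_le_exp (hv k) (ha k)) n).trans ?_
  calc _ ≤ (C + s ^ 2) * (1 - r)⁻¹ * (n * t ^ 3 + t ^ 2) *
        Real.exp (s + C * (1 - r)⁻¹ + -(s / 4) * (n * t ^ 2)) :=
        mul_le_mul herror (Real.exp_le_exp.2 hdecay) (Real.exp_pos _).le (by positivity)
    _ = _ := by rw [Real.exp_add]; ring

end SmallScale

end GaussianProducts

/-! ### Gaussian approximation of distribution functions -/

section GaussianApproximation

open ProbabilityTheory NNReal

theorem gaussianPDFReal_le (m : ℝ) (v : ℝ≥0) (x : ℝ) :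
    gaussianPDFReal m v x ≤ (Real.sqrt (2 * Real.pi * v))⁻¹ := by
  rw [gaussianPDFReal_def]
  refine mul_le_of_le_one_right (by positivity) (Real.exp_le_one_iff.2 ?_)
  exact div_nonpos_of_nonpos_of_nonneg (neg_nonpos.2 (sq_nonneg _)) (by positivity)

theorem cdf_gaussianReal (m : ℝ) {v : ℝ≥0} (hv : v ≠ 0) (x : ℝ) :
    cdf (gaussianReal m v) x = ∫ y in Set.Iic x, gaussianPDFReal m v y := by
  rw [cdf_eq_real, measureReal_def, gaussianReal_apply_eq_integral _ hv,
    ENNReal.toReal_ofReal (integral_nonneg (gaussianPDFReal_nonneg m v))]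

theorem lipschitzWith_cdf_gaussianReal (m : ℝ) {v : ℝ≥0} (hv : v ≠ 0) :
    LipschitzWith (Real.toNNReal (Real.sqrt (2 * Real.pi * v))⁻¹) (cdf (gaussianReal m v)) := by
  refine LipschitzWith.of_dist_le_mul fun x y => ?_
  have hint := integrable_gaussianPDFReal m v
  rw [Real.coe_toNNReal _ (by positivity), dist_comm, Real.dist_eq, dist_comm, Real.dist_eq,
    cdf_gaussianReal m hv, cdf_gaussianReal m hv,
    intervalIntegral.integral_Iic_sub_Iic hint.integrableOn hint.integrableOn]
  refine intervalIntegral.norm_integral_le_of_norm_le_const (E := ℝ) fun z _ => ?_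
  rw [Real.norm_of_nonneg (gaussianPDFReal_nonneg m v z)]
  exact gaussianPDFReal_le m v z

theorem cdf_gaussianReal_zero_eq_stdNormalCDF {v : ℝ≥0} (hv : v ≠ 0) (u : ℝ) :
    cdf (gaussianReal 0 v) u = stdNormalCDF (u / Real.sqrt v) := by
  have hsqrt : 0 < Real.sqrt v := Real.sqrt_pos.2 (NNReal.coe_pos.2 (pos_iff_ne_zero.2 hv))
  have hscale : gaussianReal 0 v = (gaussianReal 0 1).map (Real.sqrt v * ·) := by
    rw [gaussianReal_map_const_mul, mul_zero, mul_one]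
    congr 1
    ext
    simp
  rw [hscale, ← mul_div_cancel₀ u hsqrt.ne', cdf_map_mul_left hsqrt,
    mul_div_cancel₀ u hsqrt.ne', cdf_gaussianReal 0 one_ne_zero, stdNormalCDF, ← integral_const_mul]
  simp [gaussianPDFReal_def]

theorem exists_abs_cdf_sub_le_of_norm_charFun_sub_le : ∃ C : ℝ, 0 < C ∧ ∀ (μ γ : Measure ℝ)
    [IsProbabilityMeasure μ] [IsProbabilityMeasure γ] (m T : ℝ≥0) (g : ℝ → ℝ), 0 < T →
    LipschitzWith m (cdf γ) → IntegrableOn g (Set.Ioi 0) → (∀ t, 0 < t → 0 ≤ g t) →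
    (∀ t : ℝ, 0 < t → t ≤ T → ‖charFun μ t - charFun γ t‖ ≤ t * g t) →
    ∀ x, |cdf μ x - cdf γ x| ≤ C * ((∫ t in Set.Ioi 0, g t) + m / T) := by
  obtain ⟨C, hC, hesseen⟩ := exists_abs_cdf_sub_le
  refine ⟨C, hC, fun μ γ _ _ m T g hT hlip hg hg0 hle x => ?_⟩
  have hT0 : (0 : ℝ) ≤ T := T.2
  have hgT : IntegrableOn g (Set.Ioc 0 (T : ℝ)) := hg.mono_set Set.Ioc_subset_Ioi_self
  have hquot : ∀ t ∈ Set.Ioc 0 (T : ℝ), ‖charFun μ t - charFun γ t‖ / t ≤ g t := fun t ht =>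
    (div_le_iff₀' ht.1).2 (hle t ht.1 ht.2)
  have hint : IntegrableOn (fun t => ‖charFun μ t - charFun γ t‖ / t) (Set.Ioc 0 (T : ℝ)) := by
    refine hgT.mono'
      (by fun_prop : Measurable fun t => ‖charFun μ t - charFun γ t‖ / t).aestronglyMeasurable ?_
    filter_upwards [ae_restrict_mem measurableSet_Ioc] with t ht
    rw [Real.norm_of_nonneg (div_nonneg (norm_nonneg _) ht.1.le)]
    exact hquot t ht
  refine (hesseen μ γ m T hT hlip ((intervalIntegrable_iff_integrableOn_Ioc_of_le hT0).2 hint)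
    x).trans ?_
  gcongr
  rw [intervalIntegral.integral_of_le hT0]
  refine (setIntegral_mono_on hint hgT measurableSet_Ioc hquot).trans
    (setIntegral_mono_set hg ?_ Set.Ioc_subset_Ioi_self.eventuallyLE)
  filter_upwards [ae_restrict_mem measurableSet_Ioi] with t ht using hg0 t ht

theorem integrable_sq_add_mul_exp_neg_mul_sq {c : ℝ} (hc : 0 < c) :
    Integrable fun t : ℝ => (t ^ 2 + t) * Real.exp (-c * t ^ 2) := by
  have hsq := integrable_rpow_mul_exp_neg_mul_sq hc (s := 2) (by norm_num)
  refine (hsq.add (integrable_mul_exp_neg_mul_sq hc)).congr (.of_forall fun t => ?_)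
  simp [add_mul]

theorem charFun_gaussianReal_mul_sqrt (v : ℝ≥0) (t : ℝ) (n : ℕ) :
    charFun (gaussianReal 0 v) (t * Real.sqrt n) = (Real.exp (-(v * t ^ 2 / 2)) : ℂ) ^ n := by
  rw [charFun_gaussianReal, ← Complex.ofReal_pow (Real.exp _), ← Real.exp_nat_mul,
    Complex.ofReal_exp, ← Complex.ofReal_pow, mul_pow, Real.sq_sqrt n.cast_nonneg]
  congr 1
  push_cast
  ring

theorem scaled_gaussian_error_le (c t : ℝ) {n : ℕ} (hn : 1 ≤ n) :
    (n * t ^ 3 + t ^ 2) * Real.exp (-c * (n * t ^ 2)) ≤ t * Real.sqrt n * ((Real.sqrt n)⁻¹ *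
      (((t * Real.sqrt n) ^ 2 + t * Real.sqrt n) * Real.exp (-c * (t * Real.sqrt n) ^ 2))) := by
  have hsqrt : 1 ≤ Real.sqrt n := Real.one_le_sqrt.2 (Nat.one_le_cast.2 hn)
  have hsq : (t * Real.sqrt n) ^ 2 = n * t ^ 2 := by
    rw [mul_pow, Real.sq_sqrt n.cast_nonneg, mul_comm]
  rw [hsq, mul_assoc t, mul_inv_cancel_left₀ (zero_lt_one.trans_le hsqrt).ne', ← mul_assoc t]
  gcongr
  linarith [mul_le_mul_of_nonneg_left hsqrt (sq_nonneg t)]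

theorem exists_abs_cdf_sub_gaussianReal_le {v : ℝ≥0} (hv : v ≠ 0) {r C t₀ : ℝ} (hr : 0 ≤ r)
    (hr1 : r < 1) (hC : 0 ≤ C) (ht₀ : 0 < t₀) {a : ℝ → ℕ → ℂ} {w : ℕ → ℂ}
    (hw : ∀ k, ‖w k - (v : ℝ)‖ ≤ C * r ^ k)
    (ha : ∀ t, 0 < t → t ≤ t₀ → ∀ k, ‖a t k - (1 - t ^ 2 * w k / 2)‖ ≤ C * t ^ 3)
    (μ : ℕ → Measure ℝ) [∀ n, IsProbabilityMeasure (μ n)]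
    (hμ : ∀ n : ℕ, ∀ t, 0 < t → t ≤ t₀ →
      charFun (μ n) (t * Real.sqrt n) = ∏ k ∈ Finset.range n, a t k) :
    ∃ C' : ℝ, 0 < C' ∧ ∀ n : ℕ, 1 ≤ n → ∀ u : ℝ,
      |cdf (μ n) u - cdf (gaussianReal 0 v) u| ≤ C' / Real.sqrt n := by
  have hv0 : (0 : ℝ) < v := NNReal.coe_pos.2 (pos_iff_ne_zero.2 hv)
  obtain ⟨T, hT, hTt₀, hsmall⟩ := exists_forall_smallScale hv0 hC ht₀
  obtain ⟨B, hB, hesseen⟩ := exists_abs_cdf_sub_le_of_norm_charFun_sub_le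
  lift T to ℝ≥0 using hT.le
  set A := (C + (v : ℝ) ^ 2) * (1 - r)⁻¹ * Real.exp (v + C * (1 - r)⁻¹)
  have hA : 0 ≤ A := by
    have : 0 < 1 - r := sub_pos.2 hr1
    positivity
  set g : ℝ → ℝ := fun t => (t ^ 2 + t) * Real.exp (-(v / 4) * t ^ 2)
  have hg0 : ∀ t, 0 < t → 0 ≤ g t := fun t ht => by positivity
  have hg : Integrable g := integrable_sq_add_mul_exp_neg_mul_sq (by positivity)
  set m := Real.toNNReal (Real.sqrt (2 * Real.pi * v))⁻¹
  have hM : 0 ≤ ∫ t in Set.Ioi 0, g t := setIntegral_nonneg measurableSet_Ioi hg0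
  refine ⟨B * (A * (∫ t in Set.Ioi 0, g t) + m / T) + 1, by positivity, fun n hn u => ?_⟩
  have hsqrt : 0 < Real.sqrt n := Real.sqrt_pos.2 (Nat.cast_pos.2 hn)
  have hchar : ∀ t : ℝ, 0 < t → t ≤ (T * NNReal.sqrt n : ℝ≥0) →
      ‖charFun (μ n) t - charFun (gaussianReal 0 v) t‖ ≤ t * (A * (Real.sqrt n)⁻¹ * g t) := by
    intro t ht htT
    obtain ⟨τ, rfl⟩ : ∃ τ, t = τ * Real.sqrt n := ⟨t / Real.sqrt n, by field_simp⟩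
    have hτ : 0 < τ := pos_of_mul_pos_left ht hsqrt.le
    have hτT : τ ≤ T := by simpa [hsqrt] using htT
    rw [hμ n τ hτ (hτT.trans hTt₀), charFun_gaussianReal_mul_sqrt]
    refine ((hsmall τ hτ hτT).norm_prod_sub_exp_pow_le hv0.le hC hr hr1 hw
      (ha τ hτ (hτT.trans hTt₀)) n).trans ?_
    exact (mul_le_mul_of_nonneg_left (scaled_gaussian_error_le _ τ hn) hA).trans_eq (by ring)
  have hle := hesseen (μ n) (gaussianReal 0 v) m (T * NNReal.sqrt n) _
    (mul_pos hT (NNReal.sqrt_pos.2 (Nat.cast_pos.2 hn)))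
    (lipschitzWith_cdf_gaussianReal 0 hv) (hg.const_mul (A * (Real.sqrt n)⁻¹)).integrableOn
    (fun t ht => mul_nonneg (by positivity) (hg0 t ht)) hchar u
  calc _ ≤ _ := hle
    _ = B * (A * (∫ t in Set.Ioi 0, g t) + m / T) / Real.sqrt n := by
        rw [integral_const_mul, NNReal.coe_mul, Real.coe_sqrt, NNReal.coe_natCast]
        field_simp
    _ ≤ _ := by gcongr; exact le_add_of_nonneg_right zero_le_one

end GaussianApproximation

/-! ### Birkhoff sums -/

section BirkhoffSums

theorem exists_tendsto_inv_smul_of_norm_increment_sub_le {F : Type*} [NormedAddCommGroup F]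
    [NormedSpace ℝ F] [CompleteSpace F] {V : ℕ → F} {C r : ℝ} (hr1 : r < 1)
    (hV : ∀ k, ‖(V (k + 2) - V (k + 1)) - (V (k + 1) - V k)‖ ≤ C * r ^ k) :
    ∃ s : F, Tendsto (fun n : ℕ => (n : ℝ)⁻¹ • V n) atTop (𝓝 s) ∧
      ∀ k, ‖V (k + 1) - V k - s‖ ≤ C / (1 - r) * r ^ k := by
  have hdist : ∀ k, dist (V (k + 1) - V k) (V (k + 2) - V (k + 1)) ≤ C * r ^ k := fun k => by
    rw [dist_comm, dist_eq_norm]; exact hV k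
  obtain ⟨s, hs⟩ := cauchySeq_tendsto_of_complete (cauchySeq_of_le_geometric r C hr1 hdist)
  refine ⟨s, ?_, fun k => ?_⟩
  · have hV0 : Tendsto (fun n : ℕ => (n : ℝ)⁻¹ • V 0) atTop (𝓝 0) := by
      simpa using (tendsto_inv_atTop_nhds_zero_nat (𝕜 := ℝ)).smul_const (V 0)
    have hlim := hs.cesaro_smul.add hV0
    rw [add_zero] at hlim
    refine hlim.congr fun n => ?_
    rw [Finset.sum_range_sub, ← smul_add, sub_add_cancel]
  · rw [← dist_eq_norm, div_mul_eq_mul_div]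
    exact dist_le_of_le_geometric_of_tendsto r C hr1 hdist hs k

variable {X : Type*} [TopologicalSpace X] {σ : C(X, X)} {η : X →ᵇ ℝ}

/-- The Birkhoff sums `∑ₖ η ∘ σᵏ`, `k < n`, as bounded continuous functions. -/
def boundedBirkhoffSum (σ : C(X, X)) (η : X →ᵇ ℝ) : ℕ → X →ᵇ ℝ
  | 0 => 0
  | n + 1 => η + (boundedBirkhoffSum σ η n).compContinuous σ

theorem boundedBirkhoffSum_apply (n : ℕ) (x : X) :
    boundedBirkhoffSum σ η n x = birkhoffSum σ η n x := by
  induction n generalizing x with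
  | zero => rfl
  | succ n ih => rw [birkhoffSum_succ', ← ih]; rfl

theorem boundedBirkhoffSum_smul (t : ℝ) (n : ℕ) :
    boundedBirkhoffSum σ (t • η) n = t • boundedBirkhoffSum σ η n := by
  induction n with
  | zero => exact (smul_zero t).symm
  | succ n ih => rw [boundedBirkhoffSum, boundedBirkhoffSum, ih, smul_add]; rfl

/-- `L` is a transfer operator of `σ`: functions of the form `ψ ∘ σ` can be pulled out of `L`. -/
def IsTransferOperator (L : (X →ᵇ ℂ) →ₗ[ℂ] (X →ᵇ ℂ)) (σ : C(X, X)) : Prop :=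
  ∀ φ ψ : X →ᵇ ℂ, L (φ * ψ.compContinuous σ) = ψ * L φ

namespace IsTransferOperator

variable {L : (X →ᵇ ℂ) →ₗ[ℂ] (X →ᵇ ℂ)} {N : (X →ᵇ ℂ) →ₗ[ℂ] ℂ}

theorem mean_mul_compContinuous (hL : IsTransferOperator L σ) (hN : ∀ φ, N (L φ) = N φ)
    (φ ψ : X →ᵇ ℂ) : N (φ * ψ.compContinuous σ) = N (ψ * L φ) := by
  rw [← hN, hL]

theorem mean_expI_boundedBirkhoffSum_mul (hL : IsTransferOperator L σ)
    (hN : ∀ φ, N (L φ) = N φ) (n : ℕ) (φ : X →ᵇ ℂ) :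
    N (expI (boundedBirkhoffSum σ η n) * φ) = N ((fun φ => L (expI η * φ))^[n] φ) := by
  induction n generalizing φ with
  | zero => rw [boundedBirkhoffSum, expI_zero, one_mul]; rfl
  | succ n ih =>
    have hcocycle : expI (boundedBirkhoffSum σ η (n + 1)) * φ =
        expI η * φ * (expI (boundedBirkhoffSum σ η n)).compContinuous σ := by
      rw [boundedBirkhoffSum, expI_add, mul_right_comm]; rfl
    rw [Function.iterate_succ_apply, ← ih, hcocycle, hL.mean_mul_compContinuous hN]

theorem mean_boundedBirkhoffSum_mul (hL : IsTransferOperator L σ) (hN : ∀ φ, N (L φ) = N φ)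
    (n : ℕ) (ψ : X →ᵇ ℂ) : N (complexify (boundedBirkhoffSum σ η n) * ψ) =
      N (complexify η * ∑ k ∈ Finset.range n, L^[k] ψ) := by
  induction n generalizing ψ with
  | zero => simp [boundedBirkhoffSum]
  | succ n ih =>
    have hcocycle : complexify (boundedBirkhoffSum σ η (n + 1)) * ψ = complexify η * ψ +
        ψ * (complexify (boundedBirkhoffSum σ η n)).compContinuous σ := by
      rw [boundedBirkhoffSum, map_add, add_mul, mul_comm ψ]; rfl
    rw [hcocycle, map_add, hL.mean_mul_compContinuous hN, ih, Finset.sum_range_succ', mul_add,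
      map_add, add_comm]
    rfl

theorem mean_sq_boundedBirkhoffSum_succ_sub (hL : IsTransferOperator L σ)
    (hN : ∀ φ, N (L φ) = N φ) (hone : L 1 = 1) (n : ℕ) :
    N (complexify (boundedBirkhoffSum σ η (n + 1)) ^ 2) -
      N (complexify (boundedBirkhoffSum σ η n) ^ 2) = varianceIncrement L N η n := by
  set S := complexify (boundedBirkhoffSum σ η n)
  have hsucc : complexify (boundedBirkhoffSum σ η (n + 1)) =
      complexify η + S.compContinuous σ := by rw [boundedBirkhoffSum, map_add]; rfl
  have hsquare : (complexify η + S.compContinuous σ) ^ 2 = complexify η ^ 2 +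
      (2 : ℂ) • (complexify η * S.compContinuous σ) + 1 * (S ^ 2).compContinuous σ := by
    ext x; simp; ring
  have hcross : N (S * L (complexify η)) = N (complexify η * firstCorrector L η n) := by
    rw [hL.mean_boundedBirkhoffSum_mul hN, firstCorrector_eq_sum]
  rw [hsucc, hsquare, map_add, map_add, map_smul, hL.mean_mul_compContinuous hN,
    hL.mean_mul_compContinuous hN, hcross, hone, mul_one, add_sub_cancel_right, smul_eq_mul,
    varianceIncrement]

end IsTransferOperator

end BirkhoffSums

section LimitTheorem

open ProbabilityTheory NNReal

variable {X : Type*} [TopologicalSpace X] [MeasurableSpace X] [OpensMeasurableSpace X]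

/-- Integration against `ν` as a functional on the complex observables. -/
def integralFunctional (ν : Measure X) [IsFiniteMeasure ν] : (X →ᵇ ℂ) →ₗ[ℂ] ℂ where
  toFun φ := ∫ x, φ x ∂ν
  map_add' φ ψ := integral_add (φ.integrable ν) (ψ.integrable ν)
  map_smul' c φ := integral_const_mul c φ

variable {ν : Measure X}

theorem integralFunctional_complexify [IsFiniteMeasure ν] (ζ : X →ᵇ ℝ) :
    integralFunctional ν (complexify ζ) = (∫ x, ζ x ∂ν : ℝ) := integral_complex_ofReal

theorem integralFunctional_complexify_sq [IsFiniteMeasure ν] (ζ : X →ᵇ ℝ) :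
    integralFunctional ν (complexify ζ ^ 2) = (∫ x, ζ x ^ 2 ∂ν : ℝ) := by
  rw [← integral_complex_ofReal]
  refine integral_congr_ae (.of_forall fun x => ?_)
  simp

variable [IsProbabilityMeasure ν] {σ : C(X, X)} {L : (X →ᵇ ℂ) →ₗ[ℂ] (X →ᵇ ℂ)}
  {d : X → X → ℝ} {r K : ℝ} {η : X →ᵇ ℝ}

namespace HasSpectralGap

theorem exists_asymptoticVariance (H : HasSpectralGap L (integralFunctional ν) d r)
    (hL : IsTransferOperator L σ) (hη : ‖η‖ ≤ K) (hlip : GaugeLipschitz d K η)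
    (hmean : ∫ x, η x ∂ν = 0) :
    ∃ v : ℝ≥0, Tendsto (fun n : ℕ => (n : ℝ)⁻¹ * ∫ x, birkhoffSum σ η n x ^ 2 ∂ν) atTop (𝓝 v) ∧
      ∀ k, ‖varianceIncrement L (integralFunctional ν) η k - (v : ℝ)‖ ≤
        2 * K ^ 2 * r / (1 - r) * r ^ k := by
  have hmean' : integralFunctional ν (complexify η) = 0 := by
    rw [integralFunctional_complexify, hmean, Complex.ofReal_zero]
  set V : ℕ → ℝ := fun n => ∫ x, birkhoffSum σ η n x ^ 2 ∂ν
  have hV : ∀ k, ((V (k + 1) - V k : ℝ) : ℂ) =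
      varianceIncrement L (integralFunctional ν) η k := fun k => by
    rw [← hL.mean_sq_boundedBirkhoffSum_succ_sub H.mean_map H.map_one,
      integralFunctional_complexify_sq, integralFunctional_complexify_sq, Complex.ofReal_sub]
    simp only [boundedBirkhoffSum_apply, V]
  obtain ⟨v, hv, hrate⟩ := exists_tendsto_inv_smul_of_norm_increment_sub_le (V := V)
    (C := 2 * K ^ 2 * r) H.rate_lt_one fun k => by
      rw [← Complex.norm_real, Complex.ofReal_sub, hV, hV, mul_assoc, ← pow_succ']
      exact H.norm_varianceIncrement_succ_sub_le hη hlip hmean' k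
  lift v to ℝ≥0 using ge_of_tendsto' hv fun n =>
    mul_nonneg (by positivity) (integral_nonneg fun x => sq_nonneg _)
  refine ⟨v, hv, fun k => ?_⟩
  rw [← hV, ← Complex.ofReal_sub, Complex.norm_real]
  exact hrate k

end HasSpectralGap

/-- The law of `S_n / √n` under `ν`, where `S_n` is the `n`-th Birkhoff sum of `η` along `σ`. -/
def scaledBirkhoffLaw (ν : Measure X) (σ : C(X, X)) (η : X →ᵇ ℝ) (n : ℕ) : Measure ℝ :=
  ν.map fun x => (Real.sqrt n)⁻¹ * birkhoffSum σ η n x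

theorem measurable_scaledBirkhoffSum (σ : C(X, X)) (η : X →ᵇ ℝ) (n : ℕ) :
    Measurable fun x => (Real.sqrt n)⁻¹ * birkhoffSum σ η n x := by
  simp only [← boundedBirkhoffSum_apply]
  exact (boundedBirkhoffSum σ η n).continuous.measurable.const_mul _

instance (n : ℕ) : IsProbabilityMeasure (scaledBirkhoffLaw ν σ η n) :=
  Measure.isProbabilityMeasure_map (measurable_scaledBirkhoffSum σ η n).aemeasurable

theorem cdf_scaledBirkhoffLaw {n : ℕ} (hn : 1 ≤ n) (u : ℝ) :
    cdf (scaledBirkhoffLaw ν σ η n) u = ν.real {x | birkhoffSum σ η n x ≤ u * Real.sqrt n} := by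
  rw [cdf_eq_real, scaledBirkhoffLaw,
    map_measureReal_apply (measurable_scaledBirkhoffSum σ η n) measurableSet_Iic]
  congr 1
  ext x
  exact inv_mul_le_iff₀' (Real.sqrt_pos.2 (Nat.cast_pos.2 hn))

namespace HasSpectralGap

theorem charFun_scaledBirkhoffLaw (H : HasSpectralGap L (integralFunctional ν) d r)
    (hL : IsTransferOperator L σ) {t κ : ℝ}
    (O : SmallObservable (integralFunctional ν) d r κ (t • η)) (n : ℕ) :
    charFun (scaledBirkhoffLaw ν σ η n) (t * Real.sqrt n) =
      ∏ k ∈ Finset.range n, growthFactor L (integralFunctional ν) (t • η) k := by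
  have hprod := hL.mean_expI_boundedBirkhoffSum_mul (η := t • η) H.mean_map n 1
  rw [mul_one, O.twist_iterate_one H, map_smul,
    (O.mean_normalizedIterate_and_gaugeLipschitz H n).1, smul_eq_mul, mul_one,
    boundedBirkhoffSum_smul] at hprod
  have hcancel (x : X) :
      Real.sqrt n * ((Real.sqrt n)⁻¹ * birkhoffSum σ η n x) = birkhoffSum σ η n x := by
    rcases n.eq_zero_or_pos with rfl | hn
    · simp
    · exact mul_inv_cancel_left₀ (Real.sqrt_pos.2 (Nat.cast_pos.2 hn)).ne' _
  rw [← hprod, charFun_apply_real, scaledBirkhoffLaw,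
    integral_map (measurable_scaledBirkhoffSum σ η n).aemeasurable (by fun_prop)]
  refine integral_congr_ae (.of_forall fun x => ?_)
  simp only [expI_apply, BoundedContinuousFunction.smul_apply, smul_eq_mul,
    boundedBirkhoffSum_apply, ← Complex.ofReal_mul, mul_assoc, hcancel]
  rw [mul_comm Complex.I]

theorem exists_abs_measureReal_sub_cdf_gaussianReal_le
    (H : HasSpectralGap L (integralFunctional ν) d r) (hL : IsTransferOperator L σ)
    (hη : ‖η‖ ≤ K) (hlip : GaugeLipschitz d K η) (hmean : ∫ x, η x ∂ν = 0) {v : ℝ≥0} (hv : v ≠ 0)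
    {C : ℝ} (hC : 0 ≤ C)
    (hrate : ∀ k, ‖varianceIncrement L (integralFunctional ν) η k - (v : ℝ)‖ ≤ C * r ^ k) :
    ∃ C' : ℝ, 0 < C' ∧ ∀ n : ℕ, 1 ≤ n → ∀ u : ℝ,
      |ν.real {x | birkhoffSum σ η n x ≤ u * Real.sqrt n} - cdf (gaussianReal 0 v) u| ≤
        C' / Real.sqrt n := by
  have hgap : 0 < 1 - r := sub_pos.2 H.rate_lt_one
  have hK : 0 ≤ K := (norm_nonneg η).trans hη
  have hr := H.rate_nonneg
  set D : ℝ := 38 / (1 - r) ^ 2 * K ^ 3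
  have hD : 0 ≤ D := by positivity
  have hsmall {t : ℝ} (ht : 0 < t) (htt₀ : t ≤ (1 - r) / (8 * (K + 1))) :
      SmallObservable (integralFunctional ν) d r (t * K) (t • η) := by
    refine smallObservable_smul hη hlip ?_ ht.le ?_
    · rw [integralFunctional_complexify, hmean, Complex.ofReal_zero]
    · rw [le_div_iff₀ (by positivity)] at htt₀
      linarith
  obtain ⟨C', hC', hle⟩ := exists_abs_cdf_sub_gaussianReal_le hv hr H.rate_lt_one
    (add_nonneg hC hD) (t₀ := (1 - r) / (8 * (K + 1))) (by positivity)
    (a := fun t => growthFactor L (integralFunctional ν) (t • η))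
    (fun k => (hrate k).trans (by gcongr; linarith))
    (fun t ht htt₀ k => by
      calc _ ≤ 38 / (1 - r) ^ 2 * (t * K) ^ 3 := by
            rw [← varianceIncrement_smul]
            exact (hsmall ht htt₀).norm_growthFactor_sub_le H k
        _ = D * t ^ 3 := by ring
        _ ≤ (C + D) * t ^ 3 := by gcongr; linarith)
    (scaledBirkhoffLaw ν σ η)
    (fun n t ht htt₀ => H.charFun_scaledBirkhoffLaw hL (hsmall ht htt₀) n)
  exact ⟨C', hC', fun n hn u => by simpa only [cdf_scaledBirkhoffLaw hn] using hle n hn u⟩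

end HasSpectralGap

end LimitTheorem

/-! ### The Ruelle operator of a normalized Hölder potential -/

section Coupling

variable {A F : Type*} [MeasurableSpace A] [NormedAddCommGroup F] [NormedSpace ℝ F]
  {p : Measure A}

theorem norm_integral_smul_le {w : A → ℝ} {ψ : A → F} {c : ℝ} (hw : Integrable w p)
    (hw0 : ∀ a, 0 ≤ w a) (hψ : ∀ a, ‖ψ a‖ ≤ c) :
    ‖∫ a, w a • ψ a ∂p‖ ≤ (∫ a, w a ∂p) * c := by
  rw [← integral_mul_const]
  refine norm_integral_le_of_norm_le (hw.mul_const c) (.of_forall fun a => ?_)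
  rw [norm_smul, Real.norm_of_nonneg (hw0 a)]
  exact mul_le_mul_of_nonneg_left (hψ a) (hw0 a)

/- Couple the two densities: a fraction `κ` of the mass is moved along the diagonal, where the
observables differ by at most `δ`; the remaining mass `1 - κ` is coupled arbitrarily. -/
theorem norm_integral_smul_sub_integral_smul_le [CompleteSpace F] {w₁ w₂ : A → ℝ}
    {φ₁ φ₂ : A → F} {κ δ c : ℝ} (hw₁ : Integrable w₁ p) (hw₂ : Integrable w₂ p)
    (h₁₁ : Integrable (fun a => w₁ a • φ₁ a) p) (h₁₂ : Integrable (fun a => w₁ a • φ₂ a) p)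
    (h₂₂ : Integrable (fun a => w₂ a • φ₂ a) p) (hmass₁ : ∫ a, w₁ a ∂p = 1)
    (hmass₂ : ∫ a, w₂ a ∂p = 1) (hw₁0 : ∀ a, 0 ≤ w₁ a) (hκ : 0 ≤ κ)
    (hle : ∀ a, κ * w₁ a ≤ w₂ a) (hδ : ∀ a, ‖φ₁ a - φ₂ a‖ ≤ δ)
    (hc : ∀ a b, ‖φ₁ a - φ₂ b‖ ≤ c) :
    ‖∫ a, w₁ a • φ₁ a ∂p - ∫ a, w₂ a • φ₂ a ∂p‖ ≤ κ * δ + (1 - κ) * c := by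
  set m := ∫ a, w₁ a • φ₁ a ∂p
  have hm (b : A) : ‖m - φ₂ b‖ ≤ c := by
    have hmean : m - φ₂ b = ∫ a, w₁ a • (φ₁ a - φ₂ b) ∂p := by
      simp_rw [smul_sub]
      rw [integral_sub h₁₁ (hw₁.smul_const _), integral_smul_const, hmass₁, one_smul]
    simpa only [hmean, hmass₁, one_mul] using norm_integral_smul_le hw₁ hw₁0 fun a => hc a b
  have hdiagonal : ‖∫ a, w₁ a • (φ₁ a - φ₂ a) ∂p‖ ≤ δ := by
    simpa only [hmass₁, one_mul] using norm_integral_smul_le hw₁ hw₁0 hδ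
  have hrest : ‖∫ a, (w₂ a - κ * w₁ a) • (m - φ₂ a) ∂p‖ ≤ (1 - κ) * c := by
    have hle' := norm_integral_smul_le (hw₂.sub (hw₁.const_mul κ))
      (fun a => sub_nonneg.2 (hle a)) hm
    simp only [Pi.sub_apply] at hle'
    rwa [integral_sub hw₂ (hw₁.const_mul κ), integral_const_mul, hmass₁, hmass₂,
      mul_one] at hle'
  have hκm : Integrable (fun a => κ • w₁ a • m) p := (hw₁.smul_const m).smul κ
  have hκφ : Integrable (fun a => κ • w₁ a • φ₂ a) p := h₁₂.smul κ
  have hrestm : Integrable (fun a => w₂ a • m - κ • w₁ a • m) p := (hw₂.smul_const m).sub hκm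
  have hrestφ : Integrable (fun a => w₂ a • φ₂ a - κ • w₁ a • φ₂ a) p := h₂₂.sub hκφ
  have hsplit : m - ∫ a, w₂ a • φ₂ a ∂p =
      κ • ∫ a, w₁ a • (φ₁ a - φ₂ a) ∂p + ∫ a, (w₂ a - κ * w₁ a) • (m - φ₂ a) ∂p := by
    simp_rw [smul_sub, sub_smul, mul_smul]
    rw [integral_sub h₁₁ h₁₂, integral_sub hrestm hrestφ,
      integral_sub (hw₂.smul_const m) hκm, integral_sub h₂₂ hκφ, integral_smul,
      integral_smul, integral_smul_const, integral_smul_const, hmass₁, hmass₂]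
    module
  rw [hsplit]
  refine (norm_add_le _ _).trans (add_le_add ?_ hrest)
  rw [norm_smul, Real.norm_of_nonneg hκ]
  exact mul_le_mul_of_nonneg_left hdiagonal hκ

end Coupling

section ExpGauge

theorem one_sub_exp_neg_pos {b : ℝ} (hb : 0 < b) : 0 < 1 - Real.exp (-b) :=
  sub_pos.2 (Real.exp_lt_one_iff.2 (neg_lt_zero.2 hb))

theorem mul_one_sub_exp_neg_le {b u : ℝ} (hu0 : 0 ≤ u) (hu1 : u ≤ 1) :
    u * (1 - Real.exp (-b)) ≤ 1 - Real.exp (-(b * u)) := by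
  have hconvex := convexOn_exp.2 (Set.mem_univ 0) (Set.mem_univ (-b)) (sub_nonneg.2 hu1) hu0
    (sub_add_cancel 1 u)
  simp only [smul_eq_mul, mul_zero, Real.exp_zero, zero_add, mul_one, mul_neg,
    mul_comm u b] at hconvex
  linarith

theorem one_sub_exp_neg_mul_le {a b u : ℝ} (ha : 0 ≤ a) (hab : a ≤ b) (hb : 0 < b)
    (hu0 : 0 ≤ u) (hu1 : u ≤ 1) :
    1 - Real.exp (-(a * u)) ≤
      (1 - Real.exp (-a)) / (1 - Real.exp (-b)) * (1 - Real.exp (-(b * u))) := by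
  have hpos := one_sub_exp_neg_pos hb
  set s := (1 - Real.exp (-(b * u))) / (1 - Real.exp (-b)) with hs
  have hs0 : 0 ≤ s := div_nonneg
    (sub_nonneg.2 (Real.exp_le_one_iff.2 (neg_nonpos.2 (mul_nonneg hb.le hu0)))) hpos.le
  have hs1 : s ≤ 1 := (div_le_one hpos).2 (sub_le_sub_left
    (Real.exp_le_exp.2 (neg_le_neg (mul_le_of_le_one_right hb.le hu1))) 1)
  have hmix : 1 - s + s * Real.exp (-b) = Real.exp (-(b * u)) := by
    rw [hs]; field_simp; ring
  have hpow (x : ℝ) : Real.exp (-(b * x)) ^ (a / b) = Real.exp (-(a * x)) := by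
    rw [← Real.exp_mul]; congr 1; field_simp
  -- `exp (-a u)` is the concave function `q ↦ q ^ (a / b)` of `q = exp (-b u)`.
  have hconcave := (Real.concaveOn_rpow (div_nonneg ha hb.le) ((div_le_one hb).2 hab)).2
    (Set.mem_Ici.2 zero_le_one) (Set.mem_Ici.2 (Real.exp_pos (-b)).le) (sub_nonneg.2 hs1) hs0
    (sub_add_cancel 1 s)
  have hpow1 := hpow 1
  rw [mul_one, mul_one] at hpow1
  simp only [smul_eq_mul, mul_one, Real.one_rpow, hmix, hpow, hpow1] at hconcave
  rw [div_mul_comm, ← hs]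
  linarith

variable {A : Type*} [MetricSpace A] {α B C : ℝ}

theorem summable_dX (x y : ℕ → A) :
    Summable fun n : ℕ => ((1 : ℝ) / 2) ^ (n + 1) * min (dist (x n) (y n)) 1 :=
  .of_nonneg_of_le (fun n => by positivity)
    (fun n => mul_le_of_le_one_right (by positivity) (min_le_right _ _))
    ((summable_nat_add_iff 1).2 summable_geometric_two)

theorem dX_nonneg (x y : ℕ → A) : 0 ≤ dX x y := tsum_nonneg fun n => by positivity

theorem dX_le_one (x y : ℕ → A) : dX x y ≤ 1 := by
  have hgeometric : HasSum (fun n : ℕ => ((1 : ℝ) / 2) ^ (n + 1)) 1 := by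
    simpa [pow_succ'] using hasSum_geometric_two.mul_left (1 / 2 : ℝ)
  refine ((summable_dX x y).tsum_le_tsum (fun n => ?_) hgeometric.summable).trans_eq
    hgeometric.tsum_eq
  exact mul_le_of_le_one_right (by positivity) (min_le_right _ _)

theorem dX_cons (a : A) (x y : ℕ → A) : dX (cons a x) (cons a y) = 1 / 2 * dX x y := by
  rw [dX, (summable_dX _ _).tsum_eq_zero_add, dX, ← tsum_mul_left]
  have hhead : min (dist (cons a x 0) (cons a y 0)) 1 = 0 := by simp [cons]
  rw [hhead, mul_zero, zero_add]
  exact tsum_congr fun n => by rw [pow_succ', mul_assoc]; rfl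

theorem dX_cons_rpow (a : A) (x y : ℕ → A) :
    dX (cons a x) (cons a y) ^ α = (1 / 2) ^ α * dX x y ^ α := by
  rw [dX_cons, Real.mul_rpow (by norm_num) (dX_nonneg x y)]

/-- The gauge `1 - exp (-B d_X(x,y)^α)`, a bounded substitute for `d_X^α` whose oscillations are
strictly contracted by the Ruelle operator when `B` is large compared to the Hölder constant of the
potential. -/
def expGauge (B α : ℝ) (x y : ℕ → A) : ℝ := 1 - Real.exp (-(B * dX x y ^ α))

theorem expGauge_nonneg (hB : 0 ≤ B) (x y : ℕ → A) : 0 ≤ expGauge B α x y :=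
  sub_nonneg.2 (Real.exp_le_one_iff.2
    (neg_nonpos.2 (mul_nonneg hB (Real.rpow_nonneg (dX_nonneg x y) α))))

theorem expGauge_le_one (x y : ℕ → A) : expGauge B α x y ≤ 1 :=
  sub_le_self 1 (Real.exp_pos _).le

theorem expGauge_le_mul_expGauge {B' : ℝ} (hα : 0 ≤ α) (hB' : 0 ≤ B') (hle : B' ≤ B)
    (hB : 0 < B) (x y : ℕ → A) :
    expGauge B' α x y ≤ (1 - Real.exp (-B')) / (1 - Real.exp (-B)) * expGauge B α x y :=
  one_sub_exp_neg_mul_le hB' hle hB (Real.rpow_nonneg (dX_nonneg x y) α)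
    (Real.rpow_le_one (dX_nonneg x y) (dX_le_one x y) hα)

theorem HolderConst.abs {g : (ℕ → A) → ℝ} (hg : HolderConst α C g) : HolderConst α |C| g :=
  fun x y => (hg x y).trans
    (mul_le_mul_of_nonneg_right (le_abs_self C) (Real.rpow_nonneg (dX_nonneg x y) α))

theorem HolderConst.exists_gaugeLipschitz {g : (ℕ → A) →ᵇ ℝ} (hg : HolderConst α C g)
    (hα : 0 ≤ α) (hB : 0 < B) : ∃ K, ‖g‖ ≤ K ∧ GaugeLipschitz (expGauge B α) K g := by
  have hpos := one_sub_exp_neg_pos hB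
  have hlip : GaugeLipschitz (expGauge B α) (|C| / (1 - Real.exp (-B))) g := fun x y => by
    refine (hg.abs x y).trans ?_
    rw [div_mul_eq_mul_div, mul_div_assoc]
    refine mul_le_mul_of_nonneg_left ((le_div_iff₀ hpos).2 ?_) (abs_nonneg C)
    exact mul_one_sub_exp_neg_le (Real.rpow_nonneg (dX_nonneg x y) α)
      (Real.rpow_le_one (dX_nonneg x y) (dX_le_one x y) hα)
  exact ⟨_, le_max_left _ _, hlip.mono (expGauge_nonneg hB.le) (le_max_right _ _)⟩

end ExpGauge

section RuelleOperator

theorem integral_exp_cons_eq_one {A : Type*} [MeasurableSpace A] {p : Measure A}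
    {f : (ℕ → A) → ℝ} (hnorm : ∀ x, ruelle p f (fun _ => 1) x = 1) (x : ℕ → A) :
    ∫ a, Real.exp (f (cons a x)) ∂p = 1 := by
  simpa only [ruelle, mul_one] using hnorm x

variable {A : Type*} [MetricSpace A]

theorem continuous_cons_left (x : ℕ → A) : Continuous fun a : A => cons a x :=
  continuous_pi fun n => by
    cases n with
    | zero => exact continuous_id
    | succ n => exact continuous_const

theorem continuous_cons_right (a : A) : Continuous (cons a) :=
  continuous_pi fun n => by
    cases n with
    | zero => exact continuous_const
    | succ n => exact continuous_apply n

theorem norm_exp_smul_le (f : (ℕ → A) →ᵇ ℝ) (φ : (ℕ → A) →ᵇ ℂ) (x y : ℕ → A) :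
    ‖Real.exp (f x) • φ y‖ ≤ Real.exp ‖f‖ * ‖φ‖ := by
  rw [norm_smul, Real.norm_of_nonneg (Real.exp_pos _).le]
  gcongr
  · exact (le_abs_self _).trans (f.norm_coe_le_norm x)
  · exact φ.norm_coe_le_norm y

variable [MeasurableSpace A] [OpensMeasurableSpace A] (p : Measure A) [IsFiniteMeasure p]
  (f : (ℕ → A) →ᵇ ℝ)

theorem integrable_exp_cons_smul (φ : (ℕ → A) →ᵇ ℂ) (x y : ℕ → A) :
    Integrable (fun a => Real.exp (f (cons a x)) • φ (cons a y)) p :=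
  .of_bound ((Real.continuous_exp.comp (f.continuous.comp (continuous_cons_left x))).smul
      (φ.continuous.comp (continuous_cons_left y))).aestronglyMeasurable _
    (.of_forall fun _ => norm_exp_smul_le f φ _ _)

theorem integrable_exp_cons (x : ℕ → A) : Integrable (fun a => Real.exp (f (cons a x))) p := by
  simpa only [BoundedContinuousFunction.coe_one, Pi.one_apply, Complex.real_smul, mul_one,
    RCLike.re_eq_complex_re, Complex.ofReal_re] using (integrable_exp_cons_smul p f 1 x x).re

/-- The Ruelle operator of the potential `f`, acting on complex bounded continuous functions. -/
def ruelleOp : ((ℕ → A) →ᵇ ℂ) →ₗ[ℂ] ((ℕ → A) →ᵇ ℂ) where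
  toFun φ := BoundedContinuousFunction.ofNormedAddCommGroup
    (fun x => ∫ a, Real.exp (f (cons a x)) • φ (cons a x) ∂p)
    (continuous_of_dominated
      (fun x => (integrable_exp_cons_smul p f φ x x).aestronglyMeasurable)
      (fun _ => .of_forall fun _ => norm_exp_smul_le f φ _ _) (integrable_const _)
      (.of_forall fun a =>
        (Real.continuous_exp.comp (f.continuous.comp (continuous_cons_right a))).smul
          (φ.continuous.comp (continuous_cons_right a))))
    (Real.exp ‖f‖ * ‖φ‖ * p.real Set.univ)
    fun _ => norm_integral_le_of_norm_le_const (.of_forall fun _ => norm_exp_smul_le f φ _ _)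
  map_add' φ ψ := by
    ext x
    simp only [BoundedContinuousFunction.coe_ofNormedAddCommGroup,
      BoundedContinuousFunction.add_apply, smul_add]
    exact integral_add (integrable_exp_cons_smul p f φ x x) (integrable_exp_cons_smul p f ψ x x)
  map_smul' z φ := by
    ext x
    simp only [BoundedContinuousFunction.coe_ofNormedAddCommGroup,
      BoundedContinuousFunction.smul_apply, smul_comm _ z]
    exact integral_smul z _

theorem ruelleOp_apply (φ : (ℕ → A) →ᵇ ℂ) (x : ℕ → A) :
    ruelleOp p f φ x = ∫ a, Real.exp (f (cons a x)) • φ (cons a x) ∂p := rfl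

theorem isTransferOperator_ruelleOp :
    IsTransferOperator (ruelleOp p f) ⟨shift, continuous_shift⟩ := fun φ ψ => by
  ext x
  have hpull (a : A) : Real.exp (f (cons a x)) • (φ (cons a x) * ψ x) =
      ψ x * Real.exp (f (cons a x)) • φ (cons a x) := by
    rw [mul_comm (φ _), mul_smul_comm]
  exact (integral_congr_ae (.of_forall hpull)).trans (integral_const_mul _ _)

variable {p f}

theorem apply_ruelleOp (ℓ : ℂ →L[ℝ] ℝ) (φ : (ℕ → A) →ᵇ ℂ) (x : ℕ → A) :
    ℓ (ruelleOp p f φ x) = ruelle p f (fun y => ℓ (φ y)) x := by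
  rw [ruelleOp_apply, ← ℓ.integral_comp_comm (integrable_exp_cons_smul p f φ x x), ruelle]
  simp only [map_smul, smul_eq_mul]

theorem integral_ruelleOp [SecondCountableTopology A] {ν : Measure (ℕ → A)} [IsFiniteMeasure ν]
    (hconf : ∀ φ : (ℕ → A) → ℝ, MemCb φ → (∫ x, ruelle p f φ x ∂ν) = ∫ x, φ x ∂ν)
    (φ : (ℕ → A) →ᵇ ℂ) : ∫ x, ruelleOp p f φ x ∂ν = ∫ x, φ x ∂ν := by
  have hreal (ℓ : ℂ →L[ℝ] ℝ) : ℓ (∫ x, ruelleOp p f φ x ∂ν) = ℓ (∫ x, φ x ∂ν) := by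
    rw [← ℓ.integral_comp_comm ((ruelleOp p f φ).integrable ν),
      ← ℓ.integral_comp_comm (φ.integrable ν)]
    simp only [apply_ruelleOp]
    exact hconf _ ⟨ℓ.continuous.comp φ.continuous, ‖ℓ‖ * ‖φ‖,
      fun x => ℓ.le_opNorm_of_le (φ.norm_coe_le_norm x)⟩
  exact Complex.ext (hreal Complex.reCLM) (hreal Complex.imCLM)

theorem ruelleOp_one (hnorm : ∀ x, ruelle p f (fun _ => 1) x = 1) : ruelleOp p f 1 = 1 := by
  ext x
  refine (integral_smul_const _ (1 : ℂ)).trans ?_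
  rw [integral_exp_cons_eq_one hnorm, one_smul]
  rfl

variable {α B D : ℝ}

theorem gaugeLipschitz_ruelleOp (hf : HolderConst α D f)
    (hnorm : ∀ x, ruelle p f (fun _ => 1) x = 1) {c : ℝ} {φ : (ℕ → A) →ᵇ ℂ} (hc : 0 ≤ c)
    (hφ : GaugeLipschitz (expGauge B α) c φ) :
    GaugeLipschitz (expGauge ((1 / 2) ^ α * (D + B)) α) c (ruelleOp p f φ) := fun x y => by
  set u := (1 / 2) ^ α * dX x y ^ α with hu
  have hdensity (a : A) :
      Real.exp (-(D * u)) * Real.exp (f (cons a x)) ≤ Real.exp (f (cons a y)) := by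
    have hosc := (le_abs_self _).trans (hf (cons a x) (cons a y))
    rw [dX_cons_rpow] at hosc
    rw [← Real.exp_add]
    exact Real.exp_le_exp.2 (by linarith)
  have hdiagonal (a : A) : ‖φ (cons a x) - φ (cons a y)‖ ≤ c * (1 - Real.exp (-(B * u))) := by
    simpa only [expGauge, dX_cons_rpow] using hφ (cons a x) (cons a y)
  calc ‖ruelleOp p f φ x - ruelleOp p f φ y‖
      ≤ Real.exp (-(D * u)) * (c * (1 - Real.exp (-(B * u)))) + (1 - Real.exp (-(D * u))) * c :=
        norm_integral_smul_sub_integral_smul_le (integrable_exp_cons p f x)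
          (integrable_exp_cons p f y) (integrable_exp_cons_smul p f φ x x)
          (integrable_exp_cons_smul p f φ x y) (integrable_exp_cons_smul p f φ y y)
          (integral_exp_cons_eq_one hnorm x) (integral_exp_cons_eq_one hnorm y)
          (fun _ => (Real.exp_pos _).le) (Real.exp_pos _).le hdensity hdiagonal
          fun a b => (hφ _ _).trans (mul_le_of_le_one_right hc (expGauge_le_one _ _))
    _ = c * (1 - Real.exp (-(D * u)) * Real.exp (-(B * u))) := by ring
    _ = c * expGauge ((1 / 2) ^ α * (D + B)) α x y := by
        rw [← Real.exp_add, expGauge, hu]; ring_nf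

theorem hasSpectralGap_ruelleOp [SecondCountableTopology A] (hα : 0 ≤ α)
    (hf : HolderConst α D f) (hD : 0 ≤ D) (hB : 0 < B) (hlt : (1 / 2) ^ α * (D + B) < B)
    (hnorm : ∀ x, ruelle p f (fun _ => 1) x = 1) {ν : Measure (ℕ → A)} [IsProbabilityMeasure ν]
    (hconf : ∀ φ : (ℕ → A) → ℝ, MemCb φ → (∫ x, ruelle p f φ x ∂ν) = ∫ x, φ x ∂ν) :
    HasSpectralGap (ruelleOp p f) (integralFunctional ν) (expGauge B α)
      ((1 - Real.exp (-((1 / 2) ^ α * (D + B)))) / (1 - Real.exp (-B))) := by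
  have hB' : 0 ≤ (1 / 2 : ℝ) ^ α * (D + B) := by positivity
  have hpos := one_sub_exp_neg_pos hB
  exact
    { gauge_nonneg := expGauge_nonneg hB.le
      gauge_le_one := expGauge_le_one
      rate_nonneg := div_nonneg (sub_nonneg.2 (Real.exp_le_one_iff.2 (neg_nonpos.2 hB'))) hpos.le
      rate_lt_one := (div_lt_one hpos).2 (sub_lt_sub_left (Real.exp_lt_exp.2 (neg_lt_neg hlt)) 1)
      map_one := ruelleOp_one hnorm
      mean_one := by simp [integralFunctional]
      mean_map := integral_ruelleOp hconf
      norm_mean_le := fun φ => φ.norm_integral_le_norm ν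
      gaugeLipschitz_map := fun {c φ} hc hφ x y =>
        calc ‖ruelleOp p f φ x - ruelleOp p f φ y‖
            ≤ c * expGauge ((1 / 2) ^ α * (D + B)) α x y :=
              gaugeLipschitz_ruelleOp hf hnorm hc hφ x y
          _ ≤ c * (_ * expGauge B α x y) :=
              mul_le_mul_of_nonneg_left (expGauge_le_mul_expGauge hα hB' hlt.le hB x y) hc
          _ = _ := by ring }

theorem exists_hasSpectralGap_ruelleOp [SecondCountableTopology A] (hα : 0 < α)
    (hf : HolderConst α D f) (hnorm : ∀ x, ruelle p f (fun _ => 1) x = 1)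
    {ν : Measure (ℕ → A)} [IsProbabilityMeasure ν]
    (hconf : ∀ φ : (ℕ → A) → ℝ, MemCb φ → (∫ x, ruelle p f φ x ∂ν) = ∫ x, φ x ∂ν) :
    ∃ B > 0, ∃ r, HasSpectralGap (ruelleOp p f) (integralFunctional ν) (expGauge B α) r := by
  set θ : ℝ := (1 / 2) ^ α with hθ
  have : 0 < θ := by positivity
  have hgap : 0 < 1 - θ := sub_pos.2 (Real.rpow_lt_one (by norm_num) (by norm_num) hα)
  have hB : 0 < |D| * θ / (1 - θ) + 1 := by positivity
  refine ⟨_, hB, _, hasSpectralGap_ruelleOp hα.le hf.abs (abs_nonneg D) hB ?_ hnorm hconf⟩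
  have hfix : |D| * θ / (1 - θ) * (1 - θ) = |D| * θ := div_mul_cancel₀ _ hgap.ne'
  rw [← hθ]
  linarith

end RuelleOperator

/-! ### The central limit theorem with rate -/

theorem exists_boundedContinuousFunction_coe_eq {A : Type*} [MetricSpace A]
    {g : (ℕ → A) → ℝ} (hg : Continuous g) (hbdd : Bdd g) : ∃ φ : (ℕ → A) →ᵇ ℝ, ⇑φ = g :=
  let ⟨M, hM⟩ := hbdd
  ⟨.ofNormedAddCommGroup g hg M hM, rfl⟩

theorem statement11_general {A : Type*} [MetricSpace A] [TopologicalSpace.SeparableSpace A]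
    [MeasurableSpace A] [OpensMeasurableSpace A] {p : Measure A} [IsFiniteMeasure p]
    {α : ℝ} (hα : 0 < α) {f : (ℕ → A) → ℝ} (hf : MemHol α f)
    (hnormalized : ∀ x, ruelle p f (fun _ => 1) x = 1)
    {ν : Measure (ℕ → A)} [IsProbabilityMeasure ν]
    (hconf : ∀ φ : (ℕ → A) → ℝ, MemCb φ → (∫ x, ruelle p f φ x ∂ν) = ∫ x, φ x ∂ν)
    {ξ : (ℕ → A) → ℝ} (hξ : MemHol α ξ) (hmean : ∫ x, ξ x ∂ν = 0) :
    ∃ s2 : ℝ, 0 ≤ s2 ∧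
      Tendsto (fun n : ℕ => (1 / (n : ℝ)) * ∫ x, (birkhoff ξ n x) ^ 2 ∂ν) atTop (𝓝 s2) ∧
      (0 < s2 → ∃ C : ℝ, 0 < C ∧ ∀ n : ℕ, 1 ≤ n → ∀ u : ℝ,
        |(ν {x : ℕ → A | birkhoff ξ n x ≤ u * Real.sqrt n}).toReal -
            stdNormalCDF (u / Real.sqrt s2)| ≤ C / Real.sqrt n) := by
  have := UniformSpace.secondCountable_of_separable A
  obtain ⟨hf_cont, hf_bdd, D, hf_hol⟩ := hf
  obtain ⟨hξ_cont, hξ_bdd, C, hξ_hol⟩ := hξ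
  obtain ⟨f, rfl⟩ := exists_boundedContinuousFunction_coe_eq hf_cont hf_bdd
  obtain ⟨ξ, rfl⟩ := exists_boundedContinuousFunction_coe_eq hξ_cont hξ_bdd
  obtain ⟨B, hB, r, hgap⟩ := exists_hasSpectralGap_ruelleOp hα hf_hol hnormalized hconf
  obtain ⟨K, hK, hlip⟩ := hξ_hol.exists_gaugeLipschitz hα.le hB
  obtain ⟨v, hvariance, hrate⟩ :=
    hgap.exists_asymptoticVariance (isTransferOperator_ruelleOp p f) hK hlip hmean
  refine ⟨v, v.coe_nonneg, by simp_rw [one_div]; exact hvariance, fun hv => ?_⟩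
  have hv0 : v ≠ 0 := (NNReal.coe_pos.1 hv).ne'
  have hC : 0 ≤ 2 * K ^ 2 * r / (1 - r) :=
    div_nonneg (mul_nonneg (by positivity) hgap.rate_nonneg) (sub_nonneg.2 hgap.rate_lt_one.le)
  simp_rw [← cdf_gaussianReal_zero_eq_stdNormalCDF hv0]
  exact hgap.exists_abs_measureReal_sub_cdf_gaussianReal_le (isTransferOperator_ruelleOp p f)
    hK hlip hmean hv0 hC hrate

/-- Central limit theorem with rate (Berry–Esseen type) for Birkhoff
sums of a Hölder observable `ξ` with `∫ ξ dν = 0`, under a normalized Hölder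
potential: the asymptotic variance `s²` exists, and if `s > 0` then
`sup_u |ν(S_n(ξ) ≤ u √n) − Φ(u/s)| ≤ C n^{−1/2}`. -/
theorem statement11 {E : Type*} [MetricSpace E] [CompleteSpace E]
    [TopologicalSpace.SeparableSpace E] [MeasurableSpace E] [BorelSpace E] [Nonempty E]
    (p : Measure E) [IsProbabilityMeasure p]
    (α : ℝ) (hα0 : 0 < α) (hα1 : α < 1)
    (f : (ℕ → E) → ℝ) (hf : MemHol α f)
    (hnormalized : ∀ x, ruelle p f (fun _ => 1) x = 1)
    (ν : Measure (ℕ → E)) (hν : IsProbabilityMeasure ν)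
    (hconf : ∀ φ : (ℕ → E) → ℝ, MemCb φ → (∫ x, ruelle p f φ x ∂ν) = ∫ x, φ x ∂ν)
    (ξ : (ℕ → E) → ℝ) (hξ : MemHol α ξ) (hmean : (∫ x, ξ x ∂ν) = 0) :
    ∃ s2 : ℝ, 0 ≤ s2 ∧
      Tendsto (fun n : ℕ => (1 / (n : ℝ)) * ∫ x, (birkhoff ξ n x) ^ 2 ∂ν)
        atTop (nhds s2) ∧
      (0 < s2 → ∃ C : ℝ, 0 < C ∧ ∀ n : ℕ, 1 ≤ n → ∀ u : ℝ,
        |(ν {x : ℕ → E | birkhoff ξ n x ≤ u * Real.sqrt n}).toReal -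
            stdNormalCDF (u / Real.sqrt s2)| ≤ C / Real.sqrt n) := by
  exact statement11_general hα0 hf hnormalized hconf hξ hmean

end
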